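/- arXiv:1510.00756 — 6 statements merged into one kernel-verified Lean document; each statement's English description precedes it below -/
import Mathlib

section
/- Let G be a factor graph with n variables, at most s possible states per variable, e factors, maximum factor weight M, and hierarchy width h. Then the mixing time of Gibbs sampling on G satisfies t_mix ≤ (log 4 + n·log s + e·M) · n · exp(3·h·M). -/
/-!
The proof goes through a Poincaré inequality for the Gibbs measure `π`,
`Var_π f ≤ exp (h M) * ∑ v, E_π [Var_v f]`, where `Var_v` is the variance when only the
variable `v` is resampled. It is proved by induction along the recursion that defines the
hierarchy width `h` (`poincare_hw`):

* with no factors `π` is uniform and the inequality is that of Efron and Stein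
  (`poincare_one`);
* removing one factor changes the weights by a ratio confined to an interval `[a, b]` with
  `b / a ≤ exp M`. A variance is a minimum over the centring constant, so both sides are
  monotone in the weight and the constant changes by at most `exp M` (`Poincare.perturb`);
* over connected components `π` is a product measure, and Poincaré constants tensorise
  (`Poincare.tensor`).

All measures live on the full space of worlds `V → S` and are given by unnormalised weights;
a product decomposition is expressed through the map `(x, z) ↦ A.piecewise x z`.

Gibbs sampling is the average over `v` of the orthogonal projections `lineAvg w · v` of `L²(π)`,
hence self-adjoint and positive semidefinite. The Poincaré inequality bounds its quadratic form,
and therefore its norm, on mean-zero functions by `1 - γ` with `γ = exp (-3hM) / n`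
(`gibbsP_contract`). Applied to centred indicators this bounds the squared total variation
distance at time `t` by `(1 - γ) ^ (2 t) / (4 π_min)` (`sq_tv_le`), and
`π_min ≥ exp (-(n log s + e M))` gives the claim at `t = ⌊(log 4 + n log s + e M) / γ⌋`. The
doubled exponent `2 t` leaves enough room for rounding down.
-/

/-- Connectivity relation between hyperedges (factors) within the edge set `E` of a
hypergraph whose hyperedges have vertex sets given by `dep`. -/
def EdgeConn {α ι : Type*} (dep : ι → Finset α) (E : Finset ι) : ι → ι → Prop :=
  Relation.ReflTransGen fun a b => a ∈ E ∧ b ∈ E ∧ ∃ v, v ∈ dep a ∧ v ∈ dep b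

open Classical in
/-- Hierarchy width of the hypergraph with hyperedges `E`, where hyperedge `e` consists of
the vertices `dep e`.  It is `0` if there are no hyperedges; for a connected hypergraph with
at least one hyperedge it is `1 +` the minimum over removals of one hyperedge; for a
disconnected hypergraph it is the maximum over its connected components.  (Equivalently, as
implemented here: the maximum, over connected components `C` of the edge set, of
`1 + min over f ∈ C of hw (C \ {f})`.) -/
noncomputable def hw {α ι : Type*} [DecidableEq ι] (dep : ι → Finset α) (E : Finset ι) : ℕ :=
  E.sup fun e =>
    1 + ((E.filter fun f => EdgeConn dep E e f).attach.inf fun f =>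
      ((hw dep ((E.filter fun f => EdgeConn dep E e f).erase f.1) : ℕ∞))).toNat
termination_by E.card
decreasing_by
  exact lt_of_lt_of_le (Finset.card_erase_lt_of_mem f.2)
    (Finset.card_le_card (Finset.filter_subset _ _))

/-- The Gibbs distribution `π(x) = exp(energy x) / Z` on worlds `V → S`. -/
noncomputable def gibbsPi {V S : Type*} [Fintype V] [DecidableEq V] [Fintype S] [DecidableEq S]
    (energy : (V → S) → ℝ) (x : V → S) : ℝ :=
  Real.exp (energy x) / ∑ y : V → S, Real.exp (energy y)

/-- The transition matrix of Gibbs sampling: pick a variable `v` uniformly at random and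
resample it from its conditional distribution given the other variables. -/
noncomputable def gibbsP {V S : Type*} [Fintype V] [DecidableEq V] [Fintype S] [DecidableEq S]
    (energy : (V → S) → ℝ) : Matrix (V → S) (V → S) ℝ :=
  fun x y =>
    (Fintype.card V : ℝ)⁻¹ * ∑ v : V,
      if ∀ u, u ≠ v → x u = y u then
        Real.exp (energy y) / ∑ s : S, Real.exp (energy (Function.update x v s))
      else 0

/-- The chain with transition matrix `P` is, at time `t`, within total variation distance
`1/4` of `pi`, from every starting state. -/
def MixedAt {Ω : Type*} [Fintype Ω] [DecidableEq Ω] (P : Matrix Ω Ω ℝ) (pi : Ω → ℝ)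
    (t : ℕ) : Prop :=
  ∀ x : Ω, ∀ A : Finset Ω, |∑ y ∈ A, ((P ^ t) x y - pi y)| ≤ 1 / 4


/-! ### Averages and the Poincaré inequality -/

section Poincare

variable {V S : Type*} [DecidableEq V] [Fintype S]

/-- Conditional mean of `f` at `x` when the variable `v` is resampled, under the measure
proportional to `w`. -/
noncomputable def lineAvg (w f : (V → S) → ℝ) (v : V) (x : V → S) : ℝ :=
  (∑ s, w (Function.update x v s) * f (Function.update x v s)) /
    ∑ s, w (Function.update x v s)

lemma lineAvg_update (w f : (V → S) → ℝ) (v : V) (x : V → S) (s : S) :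
    lineAvg w f v (Function.update x v s) = lineAvg w f v x := by
  simp [lineAvg]

lemma lineAvg_of_update {w f : (V → S) → ℝ} [Nonempty S] (hw : ∀ x, 0 < w x) (v : V)
    (hf : ∀ x s, f (Function.update x v s) = f x) (x : V → S) : lineAvg w f v x = f x := by
  have : 0 < ∑ s, w (Function.update x v s) := Finset.sum_pos (fun _ _ => hw _) Finset.univ_nonempty
  rw [lineAvg]
  simp only [hf, ← Finset.sum_mul]
  field_simp

variable [Fintype V]

/-- Mean of `f` under the probability measure proportional to the weight `w`. -/
noncomputable def wMean (w f : (V → S) → ℝ) : ℝ :=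
  (∑ x, w x * f x) / ∑ x, w x

/-- Unnormalised Poincaré inequality with constant `c` for the single-variable resampling
dynamics of the weight `w`, restricted to functions of the variables in `A`. -/
def Poincare (w : (V → S) → ℝ) (A : Set V) (c : ℝ) : Prop :=
  ∀ f : (V → S) → ℝ, DependsOn f A →
    ∑ x, w x * (f x - wMean w f) ^ 2 ≤ c * ∑ v, ∑ x, w x * (f x - lineAvg w f v x) ^ 2

/-- Holds because `(x, s) ↦ (update x v s, x v)` is an involution of `(V → S) × S`. -/
lemma sum_sum_update (v : V) (F : (V → S) → ℝ) :
    ∑ x, ∑ s, F (Function.update x v s) = Fintype.card S * ∑ x, F x := by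
  have hinv : Function.Involutive
      (fun p : (V → S) × S => (Function.update p.1 v p.2, p.1 v)) := by
    rintro ⟨x, s⟩
    simp
  have h := Equiv.sum_comp hinv.toPerm (fun p : (V → S) × S => F p.1)
  rw [Fintype.sum_prod_type, Fintype.sum_prod_type] at h
  simpa [Finset.mul_sum] using h

/-- `lineAvg w · v` is the orthogonal projection of `L²(w)` onto functions not depending
on `v`. -/
lemma sum_mul_lineAvg [Nonempty S] {w : (V → S) → ℝ} (hw : ∀ x, 0 < w x)
    (f h : (V → S) → ℝ) (v : V) (hh : ∀ x s, h (Function.update x v s) = h x) :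
    ∑ x, w x * lineAvg w f v x * h x = ∑ x, w x * f x * h x := by
  have hc : (Fintype.card S : ℝ) ≠ 0 := by exact_mod_cast Fintype.card_ne_zero
  apply mul_left_cancel₀ hc
  rw [← sum_sum_update v, ← sum_sum_update v]
  refine Finset.sum_congr rfl fun x _ => ?_
  simp only [hh, lineAvg_update, ← Finset.sum_mul]
  congr 1
  have : 0 < ∑ s, w (Function.update x v s) := Finset.sum_pos (fun _ _ => hw _) Finset.univ_nonempty
  rw [lineAvg]
  field_simp

lemma sum_sq_sub_lineAvg [Nonempty S] {w : (V → S) → ℝ} (hw : ∀ x, 0 < w x)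
    (f : (V → S) → ℝ) (v : V) :
    ∑ x, w x * (f x - lineAvg w f v x) ^ 2 =
      ∑ x, w x * f x ^ 2 - ∑ x, w x * lineAvg w f v x ^ 2 := by
  have h := sum_mul_lineAvg hw f (lineAvg w f v) v (lineAvg_update w f v)
  have e : ∑ x, w x * (f x - lineAvg w f v x) ^ 2 = ∑ x, w x * f x ^ 2
      - 2 * ∑ x, w x * f x * lineAvg w f v x + ∑ x, w x * lineAvg w f v x * lineAvg w f v x := by
    rw [Finset.mul_sum, ← Finset.sum_sub_distrib, ← Finset.sum_add_distrib]
    exact Finset.sum_congr rfl fun x _ => by ring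
  have e2 : ∑ x, w x * lineAvg w f v x ^ 2 = ∑ x, w x * lineAvg w f v x * lineAvg w f v x :=
    Finset.sum_congr rfl fun x _ => by ring
  rw [e, e2, ← h]
  ring

lemma sum_sq_lineAvg_le [Nonempty S] {w : (V → S) → ℝ} (hw : ∀ x, 0 < w x)
    (f g : (V → S) → ℝ) (v : V) (hg : ∀ x s, g (Function.update x v s) = g x) :
    ∑ x, w x * (f x - lineAvg w f v x) ^ 2 ≤ ∑ x, w x * (f x - g x) ^ 2 := by
  have h := sum_mul_lineAvg hw f (fun x => lineAvg w f v x - g x) v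
    (fun x s => by rw [lineAvg_update, hg])
  have e : ∑ x, w x * (f x - g x) ^ 2 - ∑ x, w x * (f x - lineAvg w f v x) ^ 2
      = 2 * (∑ x, w x * f x * (lineAvg w f v x - g x)
        - ∑ x, w x * lineAvg w f v x * (lineAvg w f v x - g x))
        + ∑ x, w x * (lineAvg w f v x - g x) ^ 2 := by
    rw [← Finset.sum_sub_distrib, ← Finset.sum_sub_distrib, Finset.mul_sum,
      ← Finset.sum_add_distrib]
    exact Finset.sum_congr rfl fun x _ => by ring
  have : 0 ≤ ∑ x, w x * (lineAvg w f v x - g x) ^ 2 :=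
    Finset.sum_nonneg fun x _ => mul_nonneg (hw x).le (sq_nonneg _)
  rw [h] at e
  linarith

lemma sum_sq_sub_eq [Nonempty S] {w : (V → S) → ℝ} (hw : ∀ x, 0 < w x)
    (f : (V → S) → ℝ) (c : ℝ) :
    ∑ x, w x * (f x - c) ^ 2 =
      ∑ x, w x * (f x - wMean w f) ^ 2 + (∑ x, w x) * (wMean w f - c) ^ 2 := by
  have hW : 0 < ∑ x, w x := Finset.sum_pos (fun _ _ => hw _) Finset.univ_nonempty
  have hm : ∑ x, w x * f x = wMean w f * ∑ x, w x := by rw [wMean]; field_simp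
  have e : ∀ d : ℝ, ∑ x, w x * (f x - d) ^ 2 =
      ∑ x, w x * f x ^ 2 - 2 * d * ∑ x, w x * f x + d ^ 2 * ∑ x, w x := by
    intro d
    rw [Finset.mul_sum, Finset.mul_sum, ← Finset.sum_sub_distrib, ← Finset.sum_add_distrib]
    exact Finset.sum_congr rfl fun x _ => by ring
  rw [e, e, hm]
  ring

lemma sum_sq_wMean_le [Nonempty S] {w : (V → S) → ℝ} (hw : ∀ x, 0 < w x)
    (f : (V → S) → ℝ) (c : ℝ) :
    ∑ x, w x * (f x - wMean w f) ^ 2 ≤ ∑ x, w x * (f x - c) ^ 2 := by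
  rw [sum_sq_sub_eq hw f c]
  have hW : 0 < ∑ x, w x := Finset.sum_pos (fun _ _ => hw _) Finset.univ_nonempty
  nlinarith [mul_nonneg hW.le (sq_nonneg (wMean w f - c))]

lemma dirichlet_nonneg {w : (V → S) → ℝ} (hw : ∀ x, 0 < w x) (f : (V → S) → ℝ) :
    0 ≤ ∑ v, ∑ x, w x * (f x - lineAvg w f v x) ^ 2 :=
  Finset.sum_nonneg fun _ _ => Finset.sum_nonneg fun x _ => mul_nonneg (hw x).le (sq_nonneg _)

lemma Poincare.mono {w : (V → S) → ℝ} (hw : ∀ x, 0 < w x) {A : Set V} {c d : ℝ}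
    (h : Poincare w A c) (hcd : c ≤ d) : Poincare w A d := fun f hf =>
  (h f hf).trans (mul_le_mul_of_nonneg_right hcd (dirichlet_nonneg hw f))

/-! ### Stability of the Poincaré inequality -/

/-- Holley–Stroock perturbation: both sides of the inequality are minima over the centring
functions, so they are monotone in the weight. -/
lemma Poincare.perturb [Nonempty S] {w w' : (V → S) → ℝ} (hw : ∀ x, 0 < w x)
    (hw' : ∀ x, 0 < w' x) {A : Set V} {c a b : ℝ} (hc : 0 ≤ c) (ha : 0 < a) (hb : 0 ≤ b)
    (h1 : ∀ x, a * w' x ≤ w x) (h2 : ∀ x, w x ≤ b * w' x) (h : Poincare w' A c) :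
    Poincare w A (b / a * c) := by
  intro f hf
  have step : ∀ v, a * ∑ x, w' x * (f x - lineAvg w' f v x) ^ 2 ≤
      ∑ x, w x * (f x - lineAvg w f v x) ^ 2 := fun v => by
    refine (mul_le_mul_of_nonneg_left
      (sum_sq_lineAvg_le hw' f (lineAvg w f v) v (lineAvg_update w f v)) ha.le).trans ?_
    rw [Finset.mul_sum]
    refine Finset.sum_le_sum fun x _ => ?_
    rw [← mul_assoc]
    exact mul_le_mul_of_nonneg_right (h1 x) (sq_nonneg _)
  calc ∑ x, w x * (f x - wMean w f) ^ 2 ≤ ∑ x, w x * (f x - wMean w' f) ^ 2 :=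
        sum_sq_wMean_le hw f _
    _ ≤ b * ∑ x, w' x * (f x - wMean w' f) ^ 2 := by
        rw [Finset.mul_sum]
        refine Finset.sum_le_sum fun x _ => ?_
        rw [← mul_assoc]
        exact mul_le_mul_of_nonneg_right (h2 x) (sq_nonneg _)
    _ ≤ b * (c * ∑ v, ∑ x, w' x * (f x - lineAvg w' f v x) ^ 2) :=
        mul_le_mul_of_nonneg_left (h f hf) hb
    _ = b / a * c * (a * ∑ v, ∑ x, w' x * (f x - lineAvg w' f v x) ^ 2) := by field_simp
    _ ≤ b / a * c * ∑ v, ∑ x, w x * (f x - lineAvg w f v x) ^ 2 := by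
        refine mul_le_mul_of_nonneg_left ?_ (by positivity)
        rw [Finset.mul_sum]
        exact Finset.sum_le_sum fun v _ => step v

/-- Up to the factor `card (V → S)`, gluing independent worlds `x` and `z` of weights `w₁` and
`w₂` gives a world of weight `w₁ * w₂`, because
`(x, z) ↦ (A.piecewise x z, A.piecewise z x)` is an involution and `w₁ x * w₂ z` depends only
on `A.piecewise x z`. -/
lemma sum_sum_piecewise (A : Finset V) {w₁ w₂ : (V → S) → ℝ} (h₁ : DependsOn w₁ (A : Set V))
    (h₂ : DependsOn w₂ (A : Set V)ᶜ) (F : (V → S) → ℝ) :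
    ∑ x, ∑ z, w₁ x * w₂ z * F (A.piecewise x z) =
      Fintype.card (V → S) * ∑ x, w₁ x * w₂ x * F x := by
  have hinv : Function.Involutive
      (fun p : (V → S) × (V → S) => (A.piecewise p.1 p.2, A.piecewise p.2 p.1)) := by
    rintro ⟨x, z⟩
    ext v <;> by_cases hv : v ∈ A <;> simp [hv]
  have h := Equiv.sum_comp hinv.toPerm
    (fun p : (V → S) × (V → S) => w₁ p.1 * w₂ p.1 * F p.1)
  rw [Fintype.sum_prod_type, Fintype.sum_prod_type] at h
  have e : ∀ x z : V → S, w₁ x * w₂ z = w₁ (A.piecewise x z) * w₂ (A.piecewise x z) := by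
    intro x z
    rw [h₁ (x := A.piecewise x z) (y := x) (fun v hv => by simp_all),
      h₂ (x := A.piecewise x z) (y := z) (fun v hv => by simp_all)]
  calc _ = ∑ x, ∑ z, w₁ (A.piecewise x z) * w₂ (A.piecewise x z) * F (A.piecewise x z) := by
        simp_rw [← e]
    _ = _ := by simpa [Finset.mul_sum] using h

/-- One half of the splitting of the Dirichlet form of a product weight: the terms of the
variables in `A`, on which the second weight does not depend. -/
lemma sum_dirichlet_piecewise [Nonempty S] (A : Finset V) {w₁ w₂ : (V → S) → ℝ}
    (hw₁ : ∀ x, 0 < w₁ x) (hw₂ : ∀ x, 0 < w₂ x)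
    (h₁ : DependsOn w₁ (A : Set V)) (h₂ : DependsOn w₂ (A : Set V)ᶜ) (f : (V → S) → ℝ) :
    ∑ z, w₂ z * ∑ v, ∑ x, w₁ x *
        (f (A.piecewise x z) - lineAvg w₁ (fun x => f (A.piecewise x z)) v x) ^ 2 =
      Fintype.card (V → S) * ∑ v ∈ A, ∑ x, w₁ x * w₂ x *
        (f x - lineAvg (fun x => w₁ x * w₂ x) f v x) ^ 2 := by
  have out : ∀ z, ∀ v ∉ A, ∑ x, w₁ x *
      (f (A.piecewise x z) - lineAvg w₁ (fun x => f (A.piecewise x z)) v x) ^ 2 = 0 := by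
    intro z v hv
    refine Finset.sum_eq_zero fun x _ => ?_
    rw [lineAvg_of_update hw₁ v]
    · simp
    · intro x s
      congr 1
      ext u
      by_cases hu : u ∈ A
      · have : u ≠ v := fun h => hv (h ▸ hu)
        simp [hu, this]
      · simp [hu]
  have inn : ∀ v ∈ A, ∀ x z, lineAvg w₁ (fun x => f (A.piecewise x z)) v x =
      lineAvg (fun x => w₁ x * w₂ x) f v (A.piecewise x z) := by
    intro v hv x z
    have hp : ∀ s, A.piecewise (Function.update x v s) z =
        Function.update (A.piecewise x z) v s := by
      intro s
      ext u
      by_cases hu : u = v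
      · subst hu; simp [hv]
      · by_cases hA : u ∈ A <;> simp [hu, hA]
    have e1 : ∀ s, w₁ (Function.update (A.piecewise x z) v s) = w₁ (Function.update x v s) := by
      intro s
      rw [← hp]
      exact h₁ fun u hu => by simp_all
    have e2 : ∀ s, w₂ (Function.update (A.piecewise x z) v s) = w₂ z := by
      intro s
      rw [← hp]
      exact h₂ fun u hu => by simp_all
    have hz := (hw₂ z).ne'
    have : 0 < ∑ s, w₁ (Function.update x v s) :=
      Finset.sum_pos (fun _ _ => hw₁ _) Finset.univ_nonempty
    simp only [lineAvg, hp, e1, e2]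
    have e3 : ∑ s, w₁ (Function.update x v s) * w₂ z * f (Function.update (A.piecewise x z) v s)
      = w₂ z * ∑ s, w₁ (Function.update x v s) * f (Function.update (A.piecewise x z) v s) := by
      rw [Finset.mul_sum]
      exact Finset.sum_congr rfl fun s _ => by ring
    rw [e3, ← Finset.sum_mul]
    field_simp
  calc _ = ∑ z, w₂ z * ∑ v ∈ A, ∑ x, w₁ x *
        (f (A.piecewise x z) - lineAvg w₁ (fun x => f (A.piecewise x z)) v x) ^ 2 := by
        refine Finset.sum_congr rfl fun z _ => ?_
        congr 1
        exact (Finset.sum_subset (Finset.subset_univ A) fun v _ hv => out z v hv).symm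
    _ = ∑ v ∈ A, ∑ x, ∑ z, w₁ x * w₂ z * (f (A.piecewise x z) -
          lineAvg (fun x => w₁ x * w₂ x) f v (A.piecewise x z)) ^ 2 := by
        simp only [Finset.mul_sum]
        rw [Finset.sum_comm]
        refine Finset.sum_congr rfl fun v hv => ?_
        rw [Finset.sum_comm]
        refine Finset.sum_congr rfl fun x _ => Finset.sum_congr rfl fun z _ => ?_
        rw [inn v hv]
        ring
    _ = _ := by
        rw [Finset.mul_sum]
        refine Finset.sum_congr rfl fun v _ => ?_
        exact sum_sum_piecewise A h₁ h₂
          (fun x => (f x - lineAvg (fun x => w₁ x * w₂ x) f v x) ^ 2)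

/-- Tensorisation: the Poincaré constant of a product measure is the larger of those of its
factors. -/
lemma Poincare.tensor [Nonempty S] (A : Finset V) (B : Set V) {w₁ w₂ : (V → S) → ℝ}
    (hw₁ : ∀ x, 0 < w₁ x) (hw₂ : ∀ x, 0 < w₂ x)
    (h₁ : DependsOn w₁ (A : Set V)) (h₂ : DependsOn w₂ (A : Set V)ᶜ) {c : ℝ}
    (p₁ : Poincare w₁ (A : Set V) c) (p₂ : Poincare w₂ B c) :
    Poincare (fun x => w₁ x * w₂ x) ((A : Set V) ∪ B) c := by
  intro f hf
  have hW₁ : 0 < ∑ x, w₁ x := Finset.sum_pos (fun _ _ => hw₁ _) Finset.univ_nonempty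
  have hcard : (0 : ℝ) < Fintype.card (V → S) := by exact_mod_cast Fintype.card_pos
  have hw : ∀ x, 0 < w₁ x * w₂ x := fun x => mul_pos (hw₁ x) (hw₂ x)
  -- `g z` is the conditional mean of `f` given the variables outside `A`
  set g : (V → S) → ℝ := fun z => wMean w₁ (fun x => f (A.piecewise x z)) with hg
  set m := wMean w₂ g with hm
  have hgm : ∀ z, (∑ x, w₁ x) * (g z - m) ^ 2 ≤
      ∑ x, w₁ x * (f (A.piecewise x z) - wMean w₂ (fun z => f (A.piecewise x z))) ^ 2 := by
    intro z
    have hmm : m = wMean w₁ (fun x => wMean w₂ (fun z => f (A.piecewise x z))) := by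
      simp only [hm, hg, wMean, mul_div_assoc', ← Finset.sum_div, Finset.mul_sum]
      rw [div_right_comm, Finset.sum_comm]
      congr 2
      exact Finset.sum_congr rfl fun x _ => Finset.sum_congr rfl fun z _ => by ring
    have hd : g z - m = (∑ x, w₁ x *
        (f (A.piecewise x z) - wMean w₂ (fun z => f (A.piecewise x z)))) / ∑ x, w₁ x := by
      rw [hmm, hg]
      simp only [mul_sub, Finset.sum_sub_distrib, sub_div]
      rfl
    have hcs := Finset.sum_sq_le_sum_mul_sum_of_sq_le_mul Finset.univ
      (r := fun x => w₁ x * (f (A.piecewise x z) - wMean w₂ (fun z => f (A.piecewise x z))))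
      (f := w₁)
      (g := fun x => w₁ x *
        (f (A.piecewise x z) - wMean w₂ (fun z => f (A.piecewise x z))) ^ 2)
      (fun x _ => (hw₁ x).le) (fun x _ => mul_nonneg (hw₁ x).le (sq_nonneg _))
      (fun x _ => le_of_eq (by ring))
    rw [hd, div_pow, mul_div_assoc', div_le_iff₀ (by positivity)]
    nlinarith
  have main : (Fintype.card (V → S) : ℝ) * ∑ x, w₁ x * w₂ x * (f x - m) ^ 2 ≤
      Fintype.card (V → S) * (c * ∑ v, ∑ x, w₁ x * w₂ x *
        (f x - lineAvg (fun x => w₁ x * w₂ x) f v x) ^ 2) := by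
    have hsplit : ∀ z, ∑ x, w₁ x * (f (A.piecewise x z) - m) ^ 2 =
        ∑ x, w₁ x * (f (A.piecewise x z) - g z) ^ 2 + (∑ x, w₁ x) * (g z - m) ^ 2 :=
      fun z => sum_sq_sub_eq hw₁ (fun x => f (A.piecewise x z)) m
    have q₁ : ∀ z, ∑ x, w₁ x * (f (A.piecewise x z) - g z) ^ 2 ≤ c * ∑ v, ∑ x, w₁ x *
        (f (A.piecewise x z) - lineAvg w₁ (fun x => f (A.piecewise x z)) v x) ^ 2 := by
      intro z
      refine p₁ (fun x => f (A.piecewise x z)) ?_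
      intro x y hxy
      apply hf
      intro u _
      by_cases hu : u ∈ A
      · simpa [hu] using hxy u (by simpa using hu)
      · simp [hu]
    have q₂ : ∀ x, ∑ z, w₂ z *
        (f (A.piecewise x z) - wMean w₂ (fun z => f (A.piecewise x z))) ^ 2 ≤
        c * ∑ v, ∑ z, w₂ z *
          (f (A.piecewise x z) - lineAvg w₂ (fun z => f (A.piecewise x z)) v z) ^ 2 := by
      intro x
      refine p₂ (fun z => f (A.piecewise x z)) ?_
      intro y z hyz
      apply hf
      intro u hu'
      by_cases hu : u ∈ A
      · simp [hu]
      · simp only [hu, not_false_eq_true, Finset.piecewise_eq_of_notMem]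
        exact hyz u (by simpa [hu] using hu')
    have d₁ := sum_dirichlet_piecewise A hw₁ hw₂ h₁ h₂ f
    have d₂ := sum_dirichlet_piecewise Aᶜ hw₂ hw₁ (by simpa using h₂) (by simpa using h₁) f
    simp only [Finset.piecewise_compl] at d₂
    have comm : (fun x => w₂ x * w₁ x) = fun x => w₁ x * w₂ x := by
      ext x; ring
    have d₂' : ∑ x, w₁ x * ∑ v, ∑ z, w₂ z *
        (f (A.piecewise x z) - lineAvg w₂ (fun z => f (A.piecewise x z)) v z) ^ 2 =
      Fintype.card (V → S) * ∑ v ∈ Aᶜ, ∑ x, w₁ x * w₂ x *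
        (f x - lineAvg (fun x => w₁ x * w₂ x) f v x) ^ 2 := by
      rw [d₂, comm]
      congr 1
      exact Finset.sum_congr rfl fun v _ => Finset.sum_congr rfl fun x _ => by ring
    calc (Fintype.card (V → S) : ℝ) * ∑ x, w₁ x * w₂ x * (f x - m) ^ 2
        = ∑ x, ∑ z, w₁ x * w₂ z * (f (A.piecewise x z) - m) ^ 2 :=
          (sum_sum_piecewise A h₁ h₂ (fun x => (f x - m) ^ 2)).symm
      _ = ∑ z, w₂ z * ∑ x, w₁ x * (f (A.piecewise x z) - m) ^ 2 := by
          rw [Finset.sum_comm]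
          simp only [Finset.mul_sum]
          exact Finset.sum_congr rfl fun z _ => Finset.sum_congr rfl fun x _ => by ring
      _ ≤ ∑ z, w₂ z * (∑ x, w₁ x * (f (A.piecewise x z) - g z) ^ 2 + ∑ x, w₁ x *
            (f (A.piecewise x z) - wMean w₂ (fun z => f (A.piecewise x z))) ^ 2) := by
          refine Finset.sum_le_sum fun z _ => mul_le_mul_of_nonneg_left ?_ (hw₂ z).le
          rw [hsplit]
          linarith [hgm z]
      _ = ∑ z, w₂ z * ∑ x, w₁ x * (f (A.piecewise x z) - g z) ^ 2 + ∑ x, w₁ x * ∑ z, w₂ z *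
            (f (A.piecewise x z) - wMean w₂ (fun z => f (A.piecewise x z))) ^ 2 := by
          simp only [mul_add, Finset.sum_add_distrib]
          congr 1
          simp only [Finset.mul_sum]
          rw [Finset.sum_comm]
          exact Finset.sum_congr rfl fun z _ => Finset.sum_congr rfl fun x _ => by ring
      _ ≤ ∑ z, w₂ z * (c * ∑ v, ∑ x, w₁ x *
            (f (A.piecewise x z) - lineAvg w₁ (fun x => f (A.piecewise x z)) v x) ^ 2) +
          ∑ x, w₁ x * (c * ∑ v, ∑ z, w₂ z *
            (f (A.piecewise x z) - lineAvg w₂ (fun z => f (A.piecewise x z)) v z) ^ 2) := by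
          refine add_le_add (Finset.sum_le_sum fun z _ => ?_) (Finset.sum_le_sum fun x _ => ?_)
          · exact mul_le_mul_of_nonneg_left (q₁ z) (hw₂ z).le
          · exact mul_le_mul_of_nonneg_left (q₂ x) (hw₁ x).le
      _ = _ := by
          simp only [mul_left_comm _ c, ← Finset.mul_sum]
          rw [d₁, d₂', ← mul_add, ← mul_add, Finset.sum_add_sum_compl, mul_left_comm]
  exact (sum_sq_wMean_le hw f m).trans (le_of_mul_le_mul_left main hcard)

/-- Efron–Stein inequality for the uniform measure, by tensorising one variable at a time. -/
lemma poincare_one [Nonempty S] (A : Finset V) :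
    Poincare (fun _ : V → S => (1 : ℝ)) (A : Set V) 1 := by
  induction A using Finset.induction_on with
  | empty =>
    intro f hf
    obtain ⟨x₀⟩ : Nonempty (V → S) := inferInstance
    refine (sum_sq_wMean_le (fun _ => one_pos) f (f x₀)).trans ?_
    rw [Finset.sum_eq_zero fun x _ => by rw [hf (x := x) (y := x₀) (by simp)]; simp, one_mul]
    exact dirichlet_nonneg (fun _ => one_pos) f
  | insert a A ha ih =>
    have single : Poincare (fun _ : V → S => (1 : ℝ)) ({a} : Set V) 1 := by
      intro f hf
      obtain ⟨x₀⟩ : Nonempty (V → S) := inferInstance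
      refine (sum_sq_wMean_le (fun _ => one_pos) f (lineAvg (fun _ => 1) f a x₀)).trans ?_
      have hx : ∀ x, lineAvg (fun _ => 1) f a x₀ = lineAvg (fun _ => 1) f a x := by
        intro x
        simp only [lineAvg]
        congr 1
        refine Finset.sum_congr rfl fun s _ => ?_
        rw [hf (x := Function.update x₀ a s) (y := Function.update x a s)
          (by rintro i rfl; simp)]
      rw [one_mul, Finset.sum_congr rfl fun x _ => by rw [hx x]]
      exact Finset.single_le_sum
        (f := fun v => ∑ x : V → S, 1 * (f x - lineAvg (fun _ => 1) f v x) ^ 2)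
        (fun v _ => Finset.sum_nonneg fun x _ => by positivity) (Finset.mem_univ a)
    have h := Poincare.tensor A {a} (w₁ := fun _ : V → S => (1 : ℝ)) (w₂ := fun _ => 1)
      (fun _ => one_pos) (fun _ => one_pos) (fun _ _ _ => rfl) (fun _ _ _ => rfl)
      ih single
    simpa [Set.union_comm] using h

end Poincare

/-! ### Hierarchy width -/

open Classical in
/-- The connected component of the hyperedge `e` in the hypergraph `E`, as a set of
hyperedges. -/
noncomputable def comp {α ι : Type*} (dep : ι → Finset α) (E : Finset ι) (e : ι) : Finset ι :=
  E.filter fun f => EdgeConn dep E e f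

lemma mem_comp_self {α ι : Type*} (dep : ι → Finset α) {E : Finset ι} {e : ι}
    (he : e ∈ E) : e ∈ comp dep E e := by
  classical
  exact Finset.mem_filter.2 ⟨he, Relation.ReflTransGen.refl⟩

/-- A union `X` of connected components has the components of `E` that it contains. -/
lemma comp_eq_of_closed {α ι : Type*} (dep : ι → Finset α) {E X : Finset ι}
    (hX : X ⊆ E)
    (hcl : ∀ a ∈ X, ∀ b ∈ E, (∃ v, v ∈ dep a ∧ v ∈ dep b) → b ∈ X) {e : ι} (he : e ∈ X) :
    comp dep X e = comp dep E e := by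
  classical
  have key : ∀ f, EdgeConn dep E e f → f ∈ X ∧ EdgeConn dep X e f := by
    intro f hf
    induction hf with
    | refl => exact ⟨he, Relation.ReflTransGen.refl⟩
    | tail _ hbc ih =>
      obtain ⟨-, hc, hv⟩ := hbc
      have := hcl _ ih.1 _ hc hv
      exact ⟨this, ih.2.tail ⟨ih.1, this, hv⟩⟩
  ext f
  simp only [comp, Finset.mem_filter]
  constructor
  · rintro ⟨hf, hc⟩
    exact ⟨hX hf, Relation.ReflTransGen.mono (fun a b h => ⟨hX h.1, hX h.2.1, h.2.2⟩) _ _ hc⟩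
  · rintro ⟨_, hc⟩
    exact key f hc

section HierarchyWidth

variable {α ι : Type*} [DecidableEq ι] (dep : ι → Finset α)

lemma hw_eq (E : Finset ι) :
    hw dep E = E.sup fun e => 1 + ((comp dep E e).attach.inf fun f =>
      ((hw dep ((comp dep E e).erase f.1) : ℕ∞))).toNat := by
  rw [hw]
  rfl

lemma exists_hw_erase_le {E : Finset ι} {e : ι} (he : e ∈ E) :
    ∃ f ∈ comp dep E e, 1 + hw dep ((comp dep E e).erase f) ≤ hw dep E := by
  obtain ⟨f, -, hf⟩ := Finset.exists_mem_eq_inf (comp dep E e).attach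
    ⟨⟨e, mem_comp_self dep he⟩, Finset.mem_attach _ _⟩
    (fun f => ((hw dep ((comp dep E e).erase f.1) : ℕ∞)))
  refine ⟨f.1, f.2, ?_⟩
  rw [hw_eq dep E]
  have h := Finset.le_sup (f := fun e => 1 + ((comp dep E e).attach.inf fun f =>
      ((hw dep ((comp dep E e).erase f.1) : ℕ∞))).toNat) he
  simp only [hf] at h
  simpa using h

lemma hw_le_of_closed {E X : Finset ι} (hX : X ⊆ E)
    (hcl : ∀ a ∈ X, ∀ b ∈ E, (∃ v, v ∈ dep a ∧ v ∈ dep b) → b ∈ X) :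
    hw dep X ≤ hw dep E := by
  rw [hw_eq dep X, hw_eq dep E]
  refine Finset.sup_le fun e he => ?_
  rw [comp_eq_of_closed dep hX hcl he]
  exact Finset.le_sup (f := fun e => 1 + ((comp dep E e).attach.inf fun f =>
      ((hw dep ((comp dep E e).erase f.1) : ℕ∞))).toNat) (hX he)

end HierarchyWidth

/-- The Poincaré constant is at most `exp (h M)`, where `h` is the hierarchy width: removing a
factor costs at most `exp M`, and splitting into components costs nothing. -/
lemma poincare_hw {V S ι : Type*} [Fintype V] [DecidableEq V]
    [Fintype S] [Nonempty S] [DecidableEq ι]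
    (dep : ι → Finset V) (φ : ι → (V → S) → ℝ)
    (hloc : ∀ j (x y : V → S), (∀ v ∈ dep j, x v = y v) → φ j x = φ j y)
    (M : ℝ) (hM : ∀ j (x y : V → S), φ j x - φ j y ≤ M) (E : Finset ι) :
    Poincare (fun x => Real.exp (∑ j ∈ E, φ j x)) Set.univ (Real.exp (hw dep E * M)) := by
  induction E using Finset.strongInduction with
  | H E ih =>
  rcases E.eq_empty_or_nonempty with rfl | ⟨e, he⟩
  · simpa [hw_eq dep ∅] using poincare_one (S := S) (Finset.univ : Finset V)
  obtain ⟨x₀⟩ : Nonempty (V → S) := inferInstance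
  have hM0 : 0 ≤ M := by simpa using hM e x₀ x₀
  set C := comp dep E e with hC
  have hCE : C ⊆ E := by
    classical
    exact Finset.filter_subset _ _
  by_cases hEq : C = E
  · -- connected case: remove the factor achieving the minimum
    obtain ⟨f, hf, hle⟩ := exists_hw_erase_le dep he
    rw [← hC, hEq] at hf hle
    have h := ih _ (Finset.erase_ssubset hf)
    have e1 : ∀ x, Real.exp (∑ j ∈ E, φ j x) =
        Real.exp (φ f x) * Real.exp (∑ j ∈ E.erase f, φ j x) := fun x => by
      rw [← Real.exp_add, Finset.add_sum_erase _ (fun j => φ j x) hf]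
    -- `φ f` takes values in `[φ f y, φ f y + M]`, with `y` a minimiser
    obtain ⟨y, hy⟩ := Finite.exists_min (φ f)
    have p := Poincare.perturb (w := fun x => Real.exp (∑ j ∈ E, φ j x))
      (fun x => Real.exp_pos _) (fun x => Real.exp_pos _) (Real.exp_pos _).le
      (a := Real.exp (φ f y)) (b := Real.exp (φ f y + M))
      (Real.exp_pos _) (Real.exp_pos _).le
      (fun x => by
        rw [e1]
        exact mul_le_mul_of_nonneg_right (Real.exp_le_exp.2 (hy x)) (Real.exp_pos _).le)
      (fun x => by
        rw [e1]
        exact mul_le_mul_of_nonneg_right (Real.exp_le_exp.2 (by linarith [hM f x y]))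
          (Real.exp_pos _).le) h
    refine p.mono (fun x => Real.exp_pos _) ?_
    rw [← Real.exp_sub, ← Real.exp_add, Real.exp_le_exp]
    have : (1 + hw dep (E.erase f) : ℝ) ≤ hw dep E := by exact_mod_cast hle
    nlinarith
  · -- disconnected case: split off the component of `e`
    have hCcl : ∀ a ∈ C, ∀ b ∈ E, (∃ v, v ∈ dep a ∧ v ∈ dep b) → b ∈ C := by
      classical
      intro a ha b hb hv
      obtain ⟨haE, hac⟩ := Finset.mem_filter.1 ha
      exact Finset.mem_filter.2 ⟨hb, hac.tail ⟨haE, hb, hv⟩⟩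
    have hDcl : ∀ a ∈ E \ C, ∀ b ∈ E, (∃ v, v ∈ dep a ∧ v ∈ dep b) → b ∈ E \ C := by
      rintro a ha b hb ⟨v, hva, hvb⟩
      rw [Finset.mem_sdiff] at ha ⊢
      exact ⟨hb, fun hbC => ha.2 (hCcl b hbC a ha.1 ⟨v, hvb, hva⟩)⟩
    have hw1 := hw_le_of_closed dep hCE hCcl
    have hw2 := hw_le_of_closed dep Finset.sdiff_subset hDcl
    have mon : ∀ X : Finset ι, hw dep X ≤ hw dep E →
        Real.exp (hw dep X * M) ≤ Real.exp (hw dep E * M) := fun X hX =>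
      Real.exp_le_exp.2 (mul_le_mul_of_nonneg_right (by exact_mod_cast hX) hM0)
    have p1 := (ih C (hCE.ssubset_of_ne hEq)).mono (fun x => Real.exp_pos _) (mon _ hw1)
    have p2 := (ih (E \ C) (Finset.sdiff_ssubset hCE ⟨e, mem_comp_self dep he⟩)).mono
      (fun x => Real.exp_pos _) (mon _ hw2)
    have t := Poincare.tensor (C.biUnion dep) Set.univ
      (w₁ := fun x : V → S => Real.exp (∑ j ∈ C, φ j x))
      (w₂ := fun x : V → S => Real.exp (∑ j ∈ E \ C, φ j x))
      (fun x => Real.exp_pos _) (fun x => Real.exp_pos _)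
      (fun x y hxy => by
        refine congrArg Real.exp (Finset.sum_congr rfl fun j hj => hloc j x y fun v hv => ?_)
        exact hxy v (Finset.mem_coe.2 (Finset.mem_biUnion.2 ⟨j, hj, hv⟩)))
      (fun x y hxy => by
        refine congrArg Real.exp (Finset.sum_congr rfl fun j hj => hloc j x y fun v hv => ?_)
        refine hxy v fun hv' => ?_
        obtain ⟨i, hi, hvi⟩ := Finset.mem_biUnion.1 (Finset.mem_coe.1 hv')
        rw [Finset.mem_sdiff] at hj
        exact hj.2 (hCcl i hi j hj.1 ⟨v, hvi, hv⟩))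
      (fun f _ => p1 f (fun x y h => congrArg f (funext fun v => h v trivial))) p2
    have e1 : ∀ x, Real.exp (∑ j ∈ C, φ j x) * Real.exp (∑ j ∈ E \ C, φ j x) =
        Real.exp (∑ j ∈ E, φ j x) := fun x => by
      rw [← Real.exp_add, add_comm, Finset.sum_sdiff hCE]
    simpa only [e1, Set.union_univ] using t

/-! ### From the Poincaré inequality to mixing -/

section Mixing

variable {V S : Type*} [Fintype V] [DecidableEq V] [Fintype S] [DecidableEq S]

lemma sum_ite_agree (x : V → S) (v : V) (F : (V → S) → ℝ) :
    (∑ y, if ∀ u, u ≠ v → x u = y u then F y else 0) = ∑ s, F (Function.update x v s) := by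
  rw [← Finset.sum_filter]
  symm
  refine Finset.sum_bij (fun s _ => Function.update x v s) ?_ ?_ ?_ ?_
  · intro s _
    simp only [Finset.mem_filter, Finset.mem_univ, true_and]
    intro u hu
    simp [hu]
  · intro a _ b _ hab
    simpa using congrFun hab v
  · intro y hy
    refine ⟨y v, Finset.mem_univ _, ?_⟩
    ext u
    by_cases hu : u = v
    · subst hu; simp
    · simpa [hu] using (Finset.mem_filter.1 hy).2 u hu
  · intro s _
    rfl

/-- Gibbs sampling acts on functions by averaging the conditional expectations. -/
lemma gibbsP_mulVec (ε f : (V → S) → ℝ) (x : V → S) :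
    (gibbsP ε).mulVec f x =
      (Fintype.card V : ℝ)⁻¹ * ∑ v, lineAvg (fun x => Real.exp (ε x)) f v x := by
  simp only [Matrix.mulVec, dotProduct, gibbsP, mul_assoc]
  rw [← Finset.mul_sum]
  congr 1
  simp only [Finset.sum_mul]
  rw [Finset.sum_comm]
  refine Finset.sum_congr rfl fun v _ => ?_
  simp only [ite_mul, zero_mul]
  rw [sum_ite_agree x v (fun y => Real.exp (ε y) /
    (∑ s, Real.exp (ε (Function.update x v s))) * f y), lineAvg, Finset.sum_div]
  exact Finset.sum_congr rfl fun s _ => by ring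

variable [Nonempty S]

/-- `P` is positive semidefinite: `⟨g, P f⟩` is the sum of `⟨K v g, K v f⟩ / n` over `v`, with
`K v` the projection `lineAvg w · v`. -/
lemma inner_gibbsP (ε f g : (V → S) → ℝ) :
    ∑ x, Real.exp (ε x) * g x * (gibbsP ε).mulVec f x =
      (Fintype.card V : ℝ)⁻¹ * ∑ v, ∑ x, Real.exp (ε x) *
        (lineAvg (fun x => Real.exp (ε x)) g v x * lineAvg (fun x => Real.exp (ε x)) f v x) := by
  have h : ∀ v, ∑ x, Real.exp (ε x) *
      (lineAvg (fun x => Real.exp (ε x)) g v x * lineAvg (fun x => Real.exp (ε x)) f v x) =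
      ∑ x, Real.exp (ε x) * g x * lineAvg (fun x => Real.exp (ε x)) f v x := fun v => by
    simpa only [mul_assoc] using sum_mul_lineAvg (w := fun x => Real.exp (ε x))
      (fun x => Real.exp_pos _) g (lineAvg (fun x => Real.exp (ε x)) f v) v
      (lineAvg_update _ _ _)
  simp only [h, gibbsP_mulVec, mul_left_comm _ (Fintype.card V : ℝ)⁻¹]
  rw [← Finset.mul_sum, Finset.sum_comm]
  simp only [Finset.mul_sum]

variable [Nonempty V]

lemma gibbsP_mulVec_const (ε : (V → S) → ℝ) (c : ℝ) :
    (gibbsP ε).mulVec (fun _ => c) = fun _ => c := by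
  have hn : (Fintype.card V : ℝ) ≠ 0 := by exact_mod_cast Fintype.card_ne_zero
  ext x
  rw [gibbsP_mulVec]
  rw [Finset.sum_congr rfl fun v _ =>
    lineAvg_of_update (f := fun _ => c) (fun x => Real.exp_pos _) v (fun _ _ => rfl) x]
  simp [hn]

lemma gibbsP_pow_mulVec_const (ε : (V → S) → ℝ) (c : ℝ) (t : ℕ) :
    (gibbsP ε ^ t).mulVec (fun _ => c) = fun _ => c := by
  induction t with
  | zero => simp
  | succ t ih => rw [pow_succ, ← Matrix.mulVec_mulVec, gibbsP_mulVec_const, ih]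

lemma sum_gibbsP_mulVec (ε f : (V → S) → ℝ) :
    ∑ x, Real.exp (ε x) * (gibbsP ε).mulVec f x = ∑ x, Real.exp (ε x) * f x := by
  have hn : (Fintype.card V : ℝ) ≠ 0 := by exact_mod_cast Fintype.card_ne_zero
  have h : ∀ v, ∑ x, Real.exp (ε x) * lineAvg (fun x => Real.exp (ε x)) f v x =
      ∑ x, Real.exp (ε x) * f x := fun v => by
    simpa using sum_mul_lineAvg (w := fun x => Real.exp (ε x)) (fun x => Real.exp_pos _) f
      (fun _ => 1) v (fun _ _ => rfl)
  simp only [gibbsP_mulVec, mul_left_comm _ (Fintype.card V : ℝ)⁻¹, Finset.mul_sum]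
  rw [Finset.sum_comm]
  simp only [← Finset.mul_sum, h]
  simp [hn]

/-- On mean-zero functions the Poincaré inequality bounds the quadratic form of `P`, hence (by
Cauchy–Schwarz for the positive semidefinite form) its operator norm. -/
lemma gibbsP_contract (ε : (V → S) → ℝ) {c : ℝ} (hc : 1 ≤ c)
    (hp : Poincare (fun x => Real.exp (ε x)) Set.univ c) (f : (V → S) → ℝ)
    (hf : ∑ x, Real.exp (ε x) * f x = 0) :
    ∑ x, Real.exp (ε x) * (gibbsP ε).mulVec f x ^ 2 ≤
      (1 - 1 / (c * Fintype.card V)) ^ 2 * ∑ x, Real.exp (ε x) * f x ^ 2 := by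
  have hn : (1 : ℝ) ≤ Fintype.card V := by exact_mod_cast Fintype.card_pos
  set n : ℝ := (Fintype.card V : ℝ) with hn'
  set w : (V → S) → ℝ := fun x => Real.exp (ε x) with hw'
  have hw : ∀ x, 0 < w x := fun x => Real.exp_pos _
  set ρ : ℝ := 1 - 1 / (c * n) with hρ
  have hρ0 : 0 ≤ ρ := by
    rw [hρ, sub_nonneg, div_le_one (by positivity)]
    nlinarith
  set N : ((V → S) → ℝ) → ℝ := fun f => ∑ x, w x * f x ^ 2 with hN
  set Q : ((V → S) → ℝ) → ℝ := fun f => ∑ v, ∑ x, w x * lineAvg w f v x ^ 2 with hQ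
  have hN0 : ∀ f, 0 ≤ N f := fun f =>
    Finset.sum_nonneg fun x _ => mul_nonneg (hw x).le (sq_nonneg _)
  have hQ0 : ∀ f, 0 ≤ Q f := fun f => Finset.sum_nonneg fun v _ =>
    Finset.sum_nonneg fun x _ => mul_nonneg (hw x).le (sq_nonneg _)
  have hQN : ∀ f, ∑ x, w x * f x = 0 → n⁻¹ * Q f ≤ ρ * N f := by
    intro f hf
    have h := hp f (fun x y h => congrArg f (funext fun v => h v trivial))
    have hm : wMean w f = 0 := by rw [wMean, hf, zero_div]
    simp only [sum_sq_sub_lineAvg hw] at h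
    rw [hm, Finset.sum_sub_distrib] at h
    simp only [sub_zero, Finset.sum_const, Finset.card_univ, nsmul_eq_mul] at h
    change N f ≤ c * (n * N f - Q f) at h
    have : ρ * N f - n⁻¹ * Q f = (c * (n * N f - Q f) - N f) / (c * n) := by
      rw [hρ]
      field_simp
      ring
    have h2 : 0 ≤ (c * (n * N f - Q f) - N f) / (c * n) :=
      div_nonneg (by linarith) (by positivity)
    linarith
  set g := (gibbsP ε).mulVec f with hg
  have hg0 : ∑ x, w x * g x = 0 := by rw [← hf]; exact sum_gibbsP_mulVec ε f
  have hin : N g = n⁻¹ * ∑ v, ∑ x, w x * (lineAvg w g v x * lineAvg w f v x) := by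
    rw [← inner_gibbsP ε f g]
    exact Finset.sum_congr rfl fun x _ => by rw [← hg]; ring
  have hcs : (∑ v, ∑ x, w x * (lineAvg w g v x * lineAvg w f v x)) ^ 2 ≤ Q g * Q f := by
    have := Finset.sum_sq_le_sum_mul_sum_of_sq_le_mul (Finset.univ : Finset (V × (V → S)))
      (r := fun p => w p.2 * (lineAvg w g p.1 p.2 * lineAvg w f p.1 p.2))
      (f := fun p => w p.2 * lineAvg w g p.1 p.2 ^ 2)
      (g := fun p => w p.2 * lineAvg w f p.1 p.2 ^ 2)
      (fun p _ => mul_nonneg (hw _).le (sq_nonneg _))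
      (fun p _ => mul_nonneg (hw _).le (sq_nonneg _)) (fun p _ => le_of_eq (by ring))
    simpa only [Fintype.sum_prod_type] using this
  have hsq : N g ^ 2 ≤ (ρ * N g) * (ρ * N f) := by
    have hni : 0 ≤ n⁻¹ := by positivity
    calc N g ^ 2 ≤ (n⁻¹ * Q g) * (n⁻¹ * Q f) := by
          rw [hin, mul_pow]
          calc _ ≤ n⁻¹ ^ 2 * (Q g * Q f) := by gcongr
            _ = _ := by ring
      _ ≤ _ := mul_le_mul (hQN g hg0) (hQN f hf) (mul_nonneg hni (hQ0 f))
          (mul_nonneg hρ0 (hN0 g))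
  change N g ≤ ρ ^ 2 * N f
  rcases (hN0 g).eq_or_lt with h0 | h0
  · rw [← h0]
    exact mul_nonneg (sq_nonneg _) (hN0 f)
  · refine le_of_mul_le_mul_left ?_ h0
    nlinarith

lemma gibbsP_pow_contract (ε : (V → S) → ℝ) {c : ℝ} (hc : 1 ≤ c)
    (hp : Poincare (fun x => Real.exp (ε x)) Set.univ c) (f : (V → S) → ℝ)
    (hf : ∑ x, Real.exp (ε x) * f x = 0) (t : ℕ) :
    ∑ x, Real.exp (ε x) * (gibbsP ε ^ t).mulVec f x = 0 ∧
    ∑ x, Real.exp (ε x) * (gibbsP ε ^ t).mulVec f x ^ 2 ≤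
      ((1 - 1 / (c * Fintype.card V)) ^ 2) ^ t * ∑ x, Real.exp (ε x) * f x ^ 2 := by
  induction t with
  | zero => simpa using hf
  | succ t ih =>
    rw [pow_succ', ← Matrix.mulVec_mulVec]
    refine ⟨by rw [sum_gibbsP_mulVec, ih.1], ?_⟩
    refine (gibbsP_contract ε hc hp _ ih.1).trans ?_
    rw [pow_succ' (_ ^ 2), mul_assoc]
    exact mul_le_mul_of_nonneg_left ih.2 (sq_nonneg _)

/-- Total variation bound: apply the contraction to the centred indicator of `A`, whose
variance is at most `1/4`, and bound the value at `x` by the `L²` norm over `√π(x)`. -/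
lemma sq_tv_le (ε : (V → S) → ℝ) {c : ℝ} (hc : 1 ≤ c)
    (hp : Poincare (fun x => Real.exp (ε x)) Set.univ c) (t : ℕ) (x : V → S)
    (A : Finset (V → S)) :
    gibbsPi ε x * (∑ y ∈ A, ((gibbsP ε ^ t) x y - gibbsPi ε y)) ^ 2 ≤
      ((1 - 1 / (c * Fintype.card V)) ^ 2) ^ t / 4 := by
  have hZ : 0 < ∑ y, Real.exp (ε y) := Finset.sum_pos (fun _ _ => Real.exp_pos _)
    Finset.univ_nonempty
  set Z := ∑ y, Real.exp (ε y) with hZ'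
  set a : ℝ := ∑ y ∈ A, Real.exp (ε y) with ha
  set p : ℝ := ∑ y ∈ A, gibbsPi ε y with hp'
  have hpa : p = a / Z := by rw [hp', ha, Finset.sum_div]; rfl
  set ind : (V → S) → ℝ := fun y => if y ∈ A then 1 else 0 with hind
  set f : (V → S) → ℝ := ind - fun _ => p with hfdef
  have hind1 : ∑ y, Real.exp (ε y) * ind y = a := by simp [hind, ha]
  have hf : ∑ y, Real.exp (ε y) * f y = 0 := by
    simp only [hfdef, Pi.sub_apply, mul_sub, Finset.sum_sub_distrib, hind1, ← Finset.sum_mul]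
    rw [← hZ', hpa]
    field_simp
    simp
  have hf2 : ∑ y, Real.exp (ε y) * f y ^ 2 ≤ Z / 4 := by
    have e : ∑ y, Real.exp (ε y) * f y ^ 2 = (1 - 2 * p) * a + p ^ 2 * Z := by
      rw [← hind1, hZ', Finset.mul_sum _ _ (1 - 2 * p), Finset.mul_sum _ _ (p ^ 2),
        ← Finset.sum_add_distrib]
      refine Finset.sum_congr rfl fun y _ => ?_
      by_cases hy : y ∈ A <;> simp [hfdef, hind, hy] <;> ring
    have hap : a = p * Z := by rw [hpa]; field_simp
    rw [e, hap]
    nlinarith [mul_nonneg hZ.le (sq_nonneg (p - 1 / 2))]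
  have hval : (gibbsP ε ^ t).mulVec f x = ∑ y ∈ A, ((gibbsP ε ^ t) x y - gibbsPi ε y) := by
    rw [hfdef, Matrix.mulVec_sub, gibbsP_pow_mulVec_const, Finset.sum_sub_distrib]
    simp [Matrix.mulVec, dotProduct, hind, hp']
  have h := (gibbsP_pow_contract ε hc hp f hf t).2
  have hx : Real.exp (ε x) * (gibbsP ε ^ t).mulVec f x ^ 2 ≤
      ∑ x, Real.exp (ε x) * (gibbsP ε ^ t).mulVec f x ^ 2 :=
    Finset.single_le_sum (f := fun x => Real.exp (ε x) * (gibbsP ε ^ t).mulVec f x ^ 2)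
      (fun x _ => mul_nonneg (Real.exp_pos _).le (sq_nonneg _)) (Finset.mem_univ x)
  rw [hval] at hx
  have hr : 0 ≤ ((1 - 1 / (c * (Fintype.card V : ℝ))) ^ 2) ^ t := pow_nonneg (sq_nonneg _) _
  rw [gibbsPi, ← hZ', div_mul_eq_mul_div, div_le_iff₀ hZ]
  calc _ ≤ ((1 - 1 / (c * (Fintype.card V : ℝ))) ^ 2) ^ t * (Z / 4) :=
        (hx.trans h).trans (mul_le_mul_of_nonneg_left hf2 hr)
    _ = _ := by ring

end Mixing

/-- **Polynomial mixing time.**  If `G` is a factor graph with `n` variables, at most `s`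
states per variable, `e` factors, maximum factor weight `M`, and hierarchy width `h`, then
the mixing time of Gibbs sampling on `G` is at most `(log 4 + n log s + e M) · n · exp(3hM)`
(i.e. there is a time `t` below this bound at which the chain is within total variation
distance `1/4` of the Gibbs distribution). -/
theorem stmt0 {V S ι : Type*} [Fintype V] [DecidableEq V] [Nonempty V]
    [Fintype S] [DecidableEq S] [Nonempty S] [Fintype ι] [DecidableEq ι]
    (dep : ι → Finset V) (φ : ι → (V → S) → ℝ)
    (hloc : ∀ j (x y : V → S), (∀ v ∈ dep j, x v = y v) → φ j x = φ j y)
    (M : ℝ) (hM : ∀ j (x y : V → S), φ j x - φ j y ≤ M)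
    (s : ℕ) (hs : Fintype.card S ≤ s) :
    ∃ t : ℕ,
      MixedAt (gibbsP fun x : V → S => ∑ j, φ j x) (gibbsPi fun x : V → S => ∑ j, φ j x) t ∧
      (t : ℝ) ≤ (Real.log 4 + Fintype.card V * Real.log s + Fintype.card ι * M) *
        Fintype.card V * Real.exp (3 * (hw dep Finset.univ : ℝ) * M) := by
  set ε : (V → S) → ℝ := fun x => ∑ j, φ j x with hε
  obtain ⟨x₀⟩ : Nonempty (V → S) := inferInstance
  set n : ℝ := (Fintype.card V : ℝ) with hn'
  have hn : 1 ≤ n := by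
    rw [hn']
    exact_mod_cast Fintype.card_pos
  -- `M` may be negative only when there are no factors
  have heM : 0 ≤ (Fintype.card ι : ℝ) * M := by
    rcases isEmpty_or_nonempty ι with h | ⟨⟨j⟩⟩
    · simp
    · have : 0 ≤ M := by simpa using hM j x₀ x₀
      positivity
  have hhM : 0 ≤ (hw dep Finset.univ : ℝ) * M := by
    rcases isEmpty_or_nonempty ι with h | ⟨⟨j⟩⟩
    · rw [hw_eq]
      simp [Finset.univ_eq_empty]
    · have : 0 ≤ M := by simpa using hM j x₀ x₀
      positivity
  have hs1 : 1 ≤ s := le_trans Fintype.card_pos hs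
  have hlog : 0 ≤ Real.log s := Real.log_nonneg (by exact_mod_cast hs1)
  have hlog4 : 0 < Real.log 4 := Real.log_pos (by norm_num)
  rcases hs1.eq_or_lt with h1 | h2
  · -- a single world
    have : Subsingleton S := Fintype.card_le_one_iff_subsingleton.1 (h1 ▸ hs)
    refine ⟨0, fun x A => ?_, ?_⟩
    · have : ∑ y ∈ A, ((gibbsP ε ^ 0) x y - gibbsPi ε y) = 0 := by
        refine Finset.sum_eq_zero fun y _ => ?_
        obtain rfl := Subsingleton.elim x y
        have hu : (Finset.univ : Finset (V → S)) = {x} :=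
          Finset.eq_singleton_iff_unique_mem.2
            ⟨Finset.mem_univ _, fun y _ => Subsingleton.elim _ _⟩
        simp [gibbsPi, hu]
      rw [this]
      norm_num
    · push_cast
      positivity
  · set L : ℝ := n * Real.log s + Fintype.card ι * M with hL
    set c : ℝ := Real.exp (3 * (hw dep Finset.univ : ℝ) * M) with hc
    have hc1 : 1 ≤ c := Real.one_le_exp (by nlinarith)
    have hp : Poincare (fun x => Real.exp (ε x)) Set.univ c :=
      (poincare_hw dep φ hloc M hM Finset.univ).mono (fun x => Real.exp_pos _)
        (Real.exp_le_exp.2 (by nlinarith))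
    have hL2 : Real.log 2 ≤ L := by
      have : Real.log 2 ≤ Real.log s := Real.log_le_log (by norm_num) (by exact_mod_cast h2)
      nlinarith
    have hpi : ∀ x, Real.exp (-L) ≤ gibbsPi ε x := by
      intro x
      have hZ : ∑ y, Real.exp (ε y) ≤ Real.exp L * Real.exp (ε x) := by
        have hy : ∀ y, Real.exp (ε y) ≤ Real.exp (Fintype.card ι * M + ε x) := by
          intro y
          rw [Real.exp_le_exp]
          have : ε y - ε x ≤ Fintype.card ι * M := by
            rw [hε]
            simp only [← Finset.sum_sub_distrib]
            refine (Finset.sum_le_sum fun j _ => hM j y x).trans ?_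
            simp
          linarith
        refine (Finset.sum_le_sum fun y _ => hy y).trans ?_
        have hsn : (Fintype.card S : ℝ) ^ Fintype.card V ≤ Real.exp (n * Real.log s) := by
          rw [hn', ← Real.log_pow, Real.exp_log (by positivity)]
          gcongr
        simp only [Finset.sum_const, Finset.card_univ, Fintype.card_fun, nsmul_eq_mul,
          Nat.cast_pow]
        rw [hL, Real.exp_add, Real.exp_add, mul_assoc]
        gcongr
      have hZ0 : 0 < ∑ y, Real.exp (ε y) :=
        Finset.sum_pos (fun _ _ => Real.exp_pos _) Finset.univ_nonempty
      rw [gibbsPi, le_div_iff₀ hZ0]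
      calc _ ≤ Real.exp (-L) * (Real.exp L * Real.exp (ε x)) := by gcongr
        _ = _ := by rw [← mul_assoc, ← Real.exp_add]; simp
    set B : ℝ := (Real.log 4 + L) * (n * c) with hB
    have hB0 : 0 ≤ B := by
      have : 0 ≤ Real.log 2 := Real.log_nonneg (by norm_num)
      have : 0 ≤ L := by linarith
      positivity
    refine ⟨⌊B⌋₊, fun x A => ?_, ?_⟩
    · set γ : ℝ := 1 / (c * n) with hγ
      have hγ0 : 0 < γ := by positivity
      have hγ1 : γ ≤ 1 := by
        rw [hγ, div_le_one (by positivity)]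
        nlinarith
      have hBγ : γ * B = Real.log 4 + L := by
        rw [hγ, hB]
        field_simp
      have hfl : γ * B - γ ≤ γ * ⌊B⌋₊ := by
        have := Nat.lt_floor_add_one B
        nlinarith
      have htv := sq_tv_le ε hc1 hp ⌊B⌋₊ x A
      set T := ∑ y ∈ A, ((gibbsP ε ^ ⌊B⌋₊) x y - gibbsPi ε y) with hT
      have hpow : ((1 - γ) ^ 2) ^ ⌊B⌋₊ ≤ Real.exp (2 - 2 * Real.log 4 - 2 * L) := by
        have h1 : (1 - γ) ^ 2 ≤ Real.exp (-2 * γ) := by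
          have := Real.add_one_le_exp (-γ)
          calc (1 - γ) ^ 2 ≤ Real.exp (-γ) ^ 2 := by
                apply pow_le_pow_left₀ <;> linarith
            _ = _ := by rw [← Real.exp_nat_mul]; congr 1; push_cast; ring
        calc _ ≤ Real.exp (-2 * γ) ^ ⌊B⌋₊ := pow_le_pow_left₀ (sq_nonneg _) h1 _
          _ = Real.exp (⌊B⌋₊ * (-2 * γ)) := (Real.exp_nat_mul _ _).symm
          _ ≤ _ := Real.exp_le_exp.2 (by nlinarith)
      -- rounding down costs `exp 2 < 8`, which the spare factor `exp (-L) ≤ 1/2` absorbs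
      have hfin : Real.exp (-L) * T ^ 2 ≤ Real.exp (-L) * (1 / 16) := by
        have he2 : Real.exp 2 ≤ 8 := by
          have h := Real.exp_one_lt_d9
          have : Real.exp 2 = Real.exp 1 ^ 2 := by rw [← Real.exp_nat_mul]; norm_num
          rw [this]
          nlinarith [Real.exp_pos 1]
        have hL2' : Real.exp (-L) ≤ 1 / 2 := by
          have : Real.exp (-L) ≤ Real.exp (-Real.log 2) := Real.exp_le_exp.2 (by linarith)
          rwa [Real.exp_neg (Real.log 2), Real.exp_log (by norm_num), ← one_div] at this
        have h16 : Real.exp (2 - 2 * Real.log 4 - 2 * L) =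
            Real.exp 2 / 16 * (Real.exp (-L) * Real.exp (-L)) := by
          rw [show (2 - 2 * Real.log 4 - 2 * L : ℝ) =
            2 + -Real.log 4 + -Real.log 4 + (-L + -L) by ring]
          rw [Real.exp_add, Real.exp_add, Real.exp_add, Real.exp_add (-L),
            Real.exp_neg (Real.log 4), Real.exp_log (by norm_num)]
          ring
        have hpos := Real.exp_pos (-L)
        calc Real.exp (-L) * T ^ 2 ≤ gibbsPi ε x * T ^ 2 :=
              mul_le_mul_of_nonneg_right (hpi x) (sq_nonneg _)
          _ ≤ Real.exp (2 - 2 * Real.log 4 - 2 * L) / 4 := htv.trans (by gcongr)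
          _ = Real.exp 2 / 64 * (Real.exp (-L) * Real.exp (-L)) := by rw [h16]; ring
          _ ≤ 8 / 64 * (Real.exp (-L) * (1 / 2)) := by gcongr
          _ = _ := by ring
      have hT2 : T ^ 2 ≤ (1 / 4) ^ 2 := by
        have := le_of_mul_le_mul_left hfin (Real.exp_pos (-L))
        linarith
      exact abs_le_of_sq_le_sq hT2 (by norm_num)
    · refine (Nat.floor_le hB0).trans (le_of_eq ?_)
      rw [hB, hL]
      ring
end

section
/- Let G and Ḡ be two factor graphs on the same variables which differ only in that G contains one additional factor φ*, where max_I φ*(I) − min_I φ*(I) ≤ M. Then the transition matrices P and P̄ of Gibbs sampling on G and Ḡ satisfy, for all pairs of distinct worlds x ≠ y, exp(−M)·P̄(x,y) ≤ P(x,y) ≤ exp(M)·P̄(x,y). -/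
/-- If the difference `f - e` of two energies oscillates by at most `M`, Gibbs transition
probabilities for `f` exceed those for `e` by a factor of at most `exp M`. -/
theorem gibbsP_le_exp_mul {V S : Type*} [Fintype V] [DecidableEq V]
    [Fintype S] [DecidableEq S] [Nonempty S] (e f : (V → S) → ℝ) (M : ℝ)
    (h : ∀ y w : V → S, (f y - e y) - (f w - e w) ≤ M) (x y : V → S) :
    gibbsP f x y ≤ Real.exp M * gibbsP e x y := by
  simp only [gibbsP]
  rw [mul_left_comm, Finset.mul_sum _ _ (Real.exp M)]
  refine mul_le_mul_of_nonneg_left (Finset.sum_le_sum fun v _ => ?_) (by positivity)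
  split_ifs
  · have pos (g : (V → S) → ℝ) : 0 < ∑ s : S, Real.exp (g (Function.update x v s)) :=
      Finset.sum_pos (fun _ _ => Real.exp_pos _) Finset.univ_nonempty
    rw [← mul_div_assoc, div_le_div_iff₀ (pos f) (pos e), Finset.mul_sum, Finset.mul_sum]
    refine Finset.sum_le_sum fun s _ => ?_
    rw [← Real.exp_add, ← Real.exp_add, ← Real.exp_add, Real.exp_le_exp]
    linarith [h y (Function.update x v s)]
  · simp

/-- Let `Ḡ` be a factor graph with factors `φ j`, and let `G` be the factor graph obtained
from `Ḡ` by adding one more factor `φstar` with `max φstar − min φstar ≤ M`.  Then the Gibbs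
sampling transition matrices `P` of `G` and `P̄` of `Ḡ` satisfy, for all distinct worlds
`x ≠ y`, `exp(−M)·P̄(x,y) ≤ P(x,y) ≤ exp(M)·P̄(x,y)`. -/
theorem stmt5 {V S ι : Type*} [Fintype V] [DecidableEq V] [Nonempty V]
    [Fintype S] [DecidableEq S] [Nonempty S] [Fintype ι]
    (φ : ι → (V → S) → ℝ) (φstar : (V → S) → ℝ)
    (M : ℝ) (hM : ∀ x y : V → S, φstar x - φstar y ≤ M) :
    ∀ x y : V → S, x ≠ y →
      Real.exp (-M) * gibbsP (fun z : V → S => ∑ j, φ j z) x y ≤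
        gibbsP (fun z : V → S => (∑ j, φ j z) + φstar z) x y ∧
      gibbsP (fun z : V → S => (∑ j, φ j z) + φstar z) x y ≤
        Real.exp M * gibbsP (fun z : V → S => ∑ j, φ j z) x y := by
  intro x y _
  constructor
  · rw [Real.exp_neg, inv_mul_le_iff₀ (Real.exp_pos M)]
    exact gibbsP_le_exp_mul _ _ M (fun y w => by linarith [hM w y]) x y
  · exact gibbsP_le_exp_mul _ _ M (fun y w => by linarith [hM y w]) x y
end

section
/- Let G be a hypergraph and let d be the maximum degree of a vertex of G, i.e., the maximum over vertices v of the number of hyperedges containing v. Then hw(G) ≥ d. -/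
/-- The degree of a single vertex is at most the hierarchy width. -/
theorem card_filter_mem_le_hw {α ι : Type*} [DecidableEq α] [DecidableEq ι]
    (dep : ι → Finset α) (x : α) (E : Finset ι) :
    (E.filter fun e => x ∈ dep e).card ≤ hw dep E := by
  classical
  induction E using Finset.strongInduction with
  | H E ih =>
  rcases (E.filter fun e => x ∈ dep e).eq_empty_or_nonempty with h | ⟨e, he⟩
  · simp [h]
  obtain ⟨heE, hxe⟩ := Finset.mem_filter.1 he
  rw [hw]
  refine le_trans ?_ (Finset.le_sup (s := E) heE)
  set C := E.filter fun f => EdgeConn dep E e f with hC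
  have heC : e ∈ C := Finset.mem_filter.2 ⟨heE, Relation.ReflTransGen.refl⟩
  -- `C` is nonempty, so the infimum in `ℕ∞` is attained and `toNat` loses nothing.
  obtain ⟨f, -, hf⟩ := Finset.exists_mem_eq_inf C.attach ⟨⟨e, heC⟩, Finset.mem_attach _ _⟩
    (fun f => ((hw dep (C.erase f.1) : ℕ) : ℕ∞))
  rw [hf, ENat.toNat_natCast]
  have hlt : C.erase f.1 ⊂ E :=
    (Finset.erase_ssubset f.2).trans_subset (Finset.filter_subset _ _)
  have hsub : (E.filter fun e => x ∈ dep e) ⊆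
      insert f.1 ((C.erase f.1).filter fun e => x ∈ dep e) := by
    intro g hg
    obtain ⟨hgE, hxg⟩ := Finset.mem_filter.1 hg
    have hgC : g ∈ C :=
      Finset.mem_filter.2 ⟨hgE, Relation.ReflTransGen.single ⟨heE, hgE, x, hxe, hxg⟩⟩
    by_cases hgf : g = f.1
    · simp [hgf]
    · simp [hgf, hgC, hxg]
  have h1 := Finset.card_le_card hsub
  have h2 := Finset.card_insert_le f.1 ((C.erase f.1).filter fun e => x ∈ dep e)
  have h3 := ih _ hlt
  omega

/-- The hierarchy width of a hypergraph is at least its maximum vertex degree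
(the maximum over vertices `x` of the number of hyperedges containing `x`). -/
theorem stmt7 {α ι : Type*} [Fintype α] [DecidableEq α] [DecidableEq ι]
    (dep : ι → Finset α) (E : Finset ι) :
    (Finset.univ.sup fun x : α => (E.filter fun e => x ∈ dep e).card) ≤ hw dep E := by
  exact Finset.sup_le fun x _ => card_filter_mem_le_hw dep x E
end

section
/- Let G_n be the path hypergraph with n vertices v_1, …, v_n and n−1 hyperedges {v_i, v_{i+1}} for i = 1, …, n−1. Then the hierarchy width of G_n equals ⌈log₂ n⌉. -/
lemma hw_le_zero_iff {α ι : Type*} [DecidableEq ι] (dep : ι → Finset α) (E : Finset ι) :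
    hw dep E ≤ 0 ↔ E = ∅ := by
  rw [hw, Finset.sup_le_iff, Finset.eq_empty_iff_forall_notMem]
  exact forall₂_congr fun e he => iff_of_false (by omega) id

/-- The recursion defining `hw`, restated without minima: every component has an edge whose
deletion brings the width down to `k`. -/
lemma hw_le_succ_iff {α ι : Type*} [DecidableEq ι] (dep : ι → Finset α) (E : Finset ι) (k : ℕ) :
    hw dep E ≤ k + 1 ↔ ∀ e ∈ E, ∃ C : Finset ι, (∀ f, f ∈ C ↔ f ∈ E ∧ EdgeConn dep E e f) ∧
      ∃ f ∈ C, hw dep (C.erase f) ≤ k := by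
  classical
  rw [hw, Finset.sup_le_iff]
  refine forall₂_congr fun e he => ?_
  set C := E.filter fun f => EdgeConn dep E e f with hC
  have heC : e ∈ C := by
    rw [hC, Finset.mem_filter]
    exact ⟨he, Relation.ReflTransGen.refl⟩
  -- The infimum is over a nonempty set, hence attained; in particular `toNat` sees a finite value.
  obtain ⟨g, -, hg⟩ := Finset.exists_mem_eq_inf C.attach ⟨⟨e, heC⟩, Finset.mem_attach _ _⟩
    (fun f => (hw dep (C.erase f.1) : ℕ∞))
  rw [hg, ENat.toNat_natCast]
  constructor
  · intro h
    exact ⟨C, fun f => by rw [hC, Finset.mem_filter], g.1, g.2, by omega⟩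
  · rintro ⟨D, hD, f, hf, hfk⟩
    obtain rfl : D = C := by
      ext x
      rw [hD, hC, Finset.mem_filter]
    have h1 : (hw dep (C.erase g.1) : ℕ∞) ≤ (hw dep (C.erase f) : ℕ∞) := by
      rw [← hg]
      exact Finset.inf_le (f := fun f : {x // x ∈ C} => (hw dep (C.erase f.1) : ℕ∞))
        (Finset.mem_attach C ⟨f, hf⟩)
    have h2 : hw dep (C.erase g.1) ≤ hw dep (C.erase f) := by exact_mod_cast h1
    omega

/-- Connectivity in a set of edges of a path: the edges lying between `e` and `f` are all present. The
hypothesis `hdep` says that two edges share a vertex iff their indices differ by at most one. -/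
lemma edgeConn_iff {α : Type*} {m : ℕ} {dep : Fin m → Finset α}
    (hdep : ∀ a b, (∃ v, v ∈ dep a ∧ v ∈ dep b) ↔ a.1 ≤ b.1 + 1 ∧ b.1 ≤ a.1 + 1)
    (E : Finset (Fin m)) (e f : Fin m) (he : e ∈ E) :
    EdgeConn dep E e f ↔
      ∀ j : Fin m, (e.1 ≤ j.1 ∧ j.1 ≤ f.1 ∨ f.1 ≤ j.1 ∧ j.1 ≤ e.1) → j ∈ E := by
  constructor
  · intro h
    induction h with
    | refl =>
      intro j hj
      obtain rfl : j = e := Fin.ext (by omega)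
      exact he
    | @tail b c _ hbc ih =>
      intro j hj
      obtain ⟨_, hc, hv⟩ := hbc
      rw [hdep] at hv
      by_cases hjc : j = c
      · rwa [hjc]
      · have : j.1 ≠ c.1 := fun h => hjc (Fin.ext h)
        exact ih j (by omega)
  · intro h
    -- Induction on the distance between the two edges, moving `f` one step towards `e`.
    obtain ⟨d, hd⟩ : ∃ d, d = (f.1 - e.1) + (e.1 - f.1) := ⟨_, rfl⟩
    induction d generalizing f with
    | zero =>
      obtain rfl : e = f := Fin.ext (by omega)
      exact Relation.ReflTransGen.refl
    | succ d ih =>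
      obtain ⟨g, hg⟩ : ∃ g : Fin m, e.1 < f.1 ∧ g.1 + 1 = f.1 ∨ f.1 < e.1 ∧ g.1 = f.1 + 1 := by
        rcases lt_or_ge e.1 f.1 with hlt | hge
        · exact ⟨⟨f.1 - 1, by omega⟩, Or.inl ⟨hlt, by simp only; omega⟩⟩
        · exact ⟨⟨f.1 + 1, by omega⟩, Or.inr ⟨by omega, rfl⟩⟩
      refine Relation.ReflTransGen.tail (ih g (fun j hj => h j (by omega)) (by omega)) ?_
      exact ⟨h g (by omega), h f (by omega), (hdep g f).2 (by omega)⟩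

/-- The characterization of hierarchy width for sets of edges of a path: `hw E ≤ k` iff every window
`[a, a + 2 ^ k)` misses `E` somewhere. Positions are natural numbers, and those outside `Fin m`
count as missing. -/
lemma hw_path_le_iff {α : Type*} {m : ℕ} {dep : Fin m → Finset α}
    (hdep : ∀ a b, (∃ v, v ∈ dep a ∧ v ∈ dep b) ↔ a.1 ≤ b.1 + 1 ∧ b.1 ≤ a.1 + 1)
    (k : ℕ) (E : Finset (Fin m)) :
    hw dep E ≤ k ↔ ∀ a : ℕ, ∃ i, a ≤ i ∧ i < a + 2 ^ k ∧ ∀ j ∈ E, j.1 ≠ i := by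
  induction k generalizing E with
  | zero =>
    rw [hw_le_zero_iff]
    constructor
    · rintro rfl a
      exact ⟨a, le_rfl, by simp, by simp⟩
    · intro h
      refine Finset.eq_empty_of_forall_notMem fun e he => ?_
      obtain ⟨i, h1, h2, h3⟩ := h e.1
      exact h3 e he (by simp at h2; omega)
  | succ k ih =>
    rw [hw_le_succ_iff]
    have hpos : 0 < 2 ^ k := by positivity
    constructor
    · intro h a
      by_contra! hno
      rw [pow_succ] at hno
      obtain ⟨e, he, hea⟩ := hno a le_rfl (by omega)
      obtain ⟨C, hC, f, hf, hle⟩ := h e he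
      rw [ih] at hle
      have hrun : ∀ i, a ≤ i → i < a + 2 ^ k * 2 → ∃ j ∈ C, j.1 = i := by
        intro i h1 h2
        obtain ⟨j, hj, hji⟩ := hno i h1 h2
        refine ⟨j, (hC j).2 ⟨hj, (edgeConn_iff hdep E e j he).2 fun l hl => ?_⟩, hji⟩
        obtain ⟨l', hl', hll⟩ := hno l.1 (by omega) (by omega)
        rwa [← Fin.ext hll]
      -- The half of the run that does not contain the deleted edge `f`.
      obtain ⟨b, hb⟩ : ∃ b, (b = a ∨ b = a + 2 ^ k) ∧ (f.1 < b ∨ b + 2 ^ k ≤ f.1) := by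
        rcases lt_or_ge f.1 (a + 2 ^ k) with hlt | hge
        · exact ⟨a + 2 ^ k, Or.inr rfl, Or.inl hlt⟩
        · exact ⟨a, Or.inl rfl, Or.inr hge⟩
      obtain ⟨i, h1, h2, h3⟩ := hle b
      obtain ⟨j, hj, hji⟩ := hrun i (by omega) (by omega)
      refine h3 j (Finset.mem_erase.2 ⟨?_, hj⟩) hji
      rintro rfl
      omega
    · intro h e he
      classical
      obtain ⟨C, hC⟩ : ∃ C : Finset (Fin m), ∀ f, f ∈ C ↔ f ∈ E ∧ EdgeConn dep E e f :=
        ⟨E.filter fun f => EdgeConn dep E e f, fun f => by rw [Finset.mem_filter]⟩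
      refine ⟨C, hC, ?_⟩
      have heC : e ∈ C := (hC e).2 ⟨he, Relation.ReflTransGen.refl⟩
      obtain ⟨p, hp, hpmin⟩ := C.exists_min_image (fun j => j.1) ⟨e, heC⟩
      obtain ⟨q, hq, hqmax⟩ := C.exists_max_image (fun j => j.1) ⟨e, heC⟩
      have hpe := hpmin e heC
      have heq := hqmax e heC
      have hpE := (edgeConn_iff hdep E e p he).1 ((hC p).1 hp).2
      have hqE := (edgeConn_iff hdep E e q he).1 ((hC q).1 hq).2
      have hmem : ∀ j : Fin m, p.1 ≤ j.1 → j.1 ≤ q.1 → j ∈ E := by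
        intro j h1 h2
        rcases le_total j.1 e.1 with h3 | h3
        · exact hpE j (by omega)
        · exact hqE j (by omega)
      have hlen : q.1 + 1 < p.1 + 2 ^ k * 2 := by
        obtain ⟨i, h1, h2, h3⟩ := h p.1
        rw [pow_succ] at h2
        by_contra hcon
        exact h3 ⟨i, by omega⟩ (hmem _ h1 (by simp only; omega)) rfl
      -- Delete the middle edge of the component `[p, q]`.
      let f : Fin m := ⟨(p.1 + q.1) / 2, by omega⟩
      have hf : f.1 = (p.1 + q.1) / 2 := rfl
      refine ⟨f, (hC f).2 ⟨hmem f (by omega) (by omega),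
        (edgeConn_iff hdep E e f he).2 fun j hj => hmem j (by omega) (by omega)⟩, ?_⟩
      rw [ih]
      intro a
      by_contra! hno
      have hin : ∀ i, a ≤ i → i < a + 2 ^ k → i ≠ f.1 ∧ p.1 ≤ i ∧ i ≤ q.1 := by
        intro i h1 h2
        obtain ⟨j, hj, hji⟩ := hno i h1 h2
        rw [Finset.mem_erase] at hj
        have h3 := hpmin j hj.2
        have h4 := hqmax j hj.2
        have h5 : j.1 ≠ f.1 := fun h => hj.1 (Fin.ext h)
        omega
      have h1 := hin a le_rfl (by omega)
      have h2 := hin (a + 2 ^ k - 1) (by omega) (by omega)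
      have h3 : ¬ (a ≤ f.1 ∧ f.1 < a + 2 ^ k) := fun h => (hin f.1 h.1 h.2).1 rfl
      omega

/-- The path hypergraph on `n` vertices `v_0, …, v_{n-1}`, with the `n-1` hyperedges
`{v_i, v_{i+1}}`, has hierarchy width `⌈log₂ n⌉`. -/
theorem stmt8 (n : ℕ) (hn : 1 ≤ n) :
    hw (fun i : Fin (n - 1) =>
        ({⟨i.1, by have := i.isLt; omega⟩, ⟨i.1 + 1, by have := i.isLt; omega⟩} :
          Finset (Fin n)))
      Finset.univ = Nat.clog 2 n := by
  refine eq_of_forall_ge_iff fun k => ?_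
  rw [hw_path_le_iff, Nat.clog_le_iff_le_pow (by norm_num)]
  · constructor
    · intro h
      obtain ⟨i, -, h2, h3⟩ := h 0
      by_contra hcon
      exact h3 ⟨i, by omega⟩ (Finset.mem_univ _) rfl
    · intro h a
      have hpos : 0 < 2 ^ k := by positivity
      -- The last position of the window lies beyond the last edge, whose index is `n - 2`.
      refine ⟨a + 2 ^ k - 1, by omega, by omega, fun j _ hj => ?_⟩
      have := j.isLt
      omega
  · intro a b
    simp only [Finset.mem_insert, Finset.mem_singleton]
    constructor
    · rintro ⟨v, hva, hvb⟩
      simp only [Fin.ext_iff] at hva hvb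
      omega
    · intro h
      refine ⟨⟨max a.1 b.1, by omega⟩, ?_, ?_⟩ <;> simp only [Fin.ext_iff] <;> omega
end

section
/- Fix ω > 0. There is a constant c > 0 such that for all sufficiently large n there is a choice of weights w, w_{T_i}, w_{F_i} in [−ω, ω] for which the mixing time of Gibbs sampling on the voting model with logical (respectively, ratio) semantics satisfies t_mix ≥ c·n·log n. -/
/-- The variables of the voting model: `none` is the query `Q` (with boolean value `true`
interpreted as `Q = 1` and `false` as `Q = -1`), `some (true, i)` is the voter `T i`, and
`some (false, i)` is the voter `F i` (with `true ↦ 1`, `false ↦ 0`). -/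
abbrev VotingVar (n : ℕ) := Option (Bool × Fin n)

/-- The value `±1` of the query variable in world `x`. -/
noncomputable def qVal {n : ℕ} (x : VotingVar n → Bool) : ℝ := if x none = true then 1 else -1

/-- The number of voters `T i` (if `b = true`) resp. `F i` (if `b = false`) that are set in
world `x`. -/
def numVoters {n : ℕ} (b : Bool) (x : VotingVar n → Bool) : ℕ :=
  (Finset.univ.filter fun i : Fin n => x (some (b, i)) = true).card

/-- The prior terms `Σ_i w_{T_i} T_i + Σ_i w_{F_i} F_i` of the voting model energy. -/
noncomputable def votingPriors {n : ℕ} (wT wF : Fin n → ℝ) (x : VotingVar n → Bool) : ℝ :=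
  (∑ i, wT i * (if x (some (true, i)) = true then 1 else 0)) +
    ∑ i, wF i * (if x (some (false, i)) = true then 1 else 0)

/-- Energy of the voting model with logical semantics:
`w·Q·max_i T_i − w·Q·max_i F_i + Σ_i w_{T_i}·T_i + Σ_i w_{F_i}·F_i`. -/
noncomputable def votingEnergyLogical (n : ℕ) (w : ℝ) (wT wF : Fin n → ℝ)
    (x : VotingVar n → Bool) : ℝ :=
  w * qVal x * (if 0 < numVoters true x then 1 else 0)
    - w * qVal x * (if 0 < numVoters false x then 1 else 0)
    + votingPriors wT wF x

/-- Energy of the voting model with ratio semantics: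
`w·Q·log(1+Σ_i T_i) − w·Q·log(1+Σ_i F_i) + Σ_i w_{T_i}·T_i + Σ_i w_{F_i}·F_i`. -/
noncomputable def votingEnergyRatio (n : ℕ) (w : ℝ) (wT wF : Fin n → ℝ)
    (x : VotingVar n → Bool) : ℝ :=
  w * qVal x * Real.log (1 + (numVoters true x : ℝ))
    - w * qVal x * Real.log (1 + (numVoters false x : ℝ))
    + votingPriors wT wF x

/-- Energy of the voting model with linear semantics:
`w·Q·Σ_i T_i − w·Q·Σ_i F_i + Σ_i w_{T_i}·T_i + Σ_i w_{F_i}·F_i`. -/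
noncomputable def votingEnergyLinear (n : ℕ) (w : ℝ) (wT wF : Fin n → ℝ)
    (x : VotingVar n → Bool) : ℝ :=
  w * qVal x * (numVoters true x : ℝ) - w * qVal x * (numVoters false x : ℝ)
    + votingPriors wT wF x

open Matrix

section Hypercube

variable {V : Type*} [Fintype V] [DecidableEq V]

/-- The value `±1` of a boolean. -/
noncomputable def boolSign (b : Bool) : ℝ := if b = true then 1 else -1

/-- The magnetization of a hypercube state: the sum of its coordinates read as signs. -/
noncomputable def signSum (x : V → Bool) : ℝ := ∑ v, boolSign (x v)

/-- One step of the chain at zero energy averages over the refreshed coordinate `v` and over its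
new value. -/
lemma gibbsP_zero_mulVec (g : (V → Bool) → ℝ) (x : V → Bool) :
    (gibbsP (fun _ : V → Bool => (0 : ℝ)) *ᵥ g) x =
      (Fintype.card V : ℝ)⁻¹ * ∑ v : V,
        (g (Function.update x v true) + g (Function.update x v false)) / 2 := by
  have key : ∀ v : V, ∑ y : V → Bool,
      (if ∀ u, u ≠ v → x u = y u then (1 / 2 : ℝ) else 0) * g y =
        (g (Function.update x v true) + g (Function.update x v false)) / 2 := by
    intro v
    have h : ∀ y : V → Bool,
        (if ∀ u, u ≠ v → x u = y u then (1 / 2 : ℝ) else 0) * g y =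
          (if y = Function.update x v true then g y / 2 else 0) +
            (if y = Function.update x v false then g y / 2 else 0) := by
      intro y
      have e : ∀ b, y = Function.update x v b ↔ (∀ u, u ≠ v → x u = y u) ∧ y v = b := by
        intro b
        rw [Function.eq_update_iff]
        constructor
        · rintro ⟨h1, h2⟩
          exact ⟨fun u hu => (h2 u hu).symm, h1⟩
        · rintro ⟨h1, h2⟩
          exact ⟨h2, fun u hu => (h1 u hu).symm⟩
      simp only [e]
      by_cases hc : ∀ u, u ≠ v → x u = y u
      · simp only [if_pos hc]
        cases hb : y v <;> simp only [and_true, and_false, reduceCtorEq, if_pos hc, if_false] <;> ring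
      · simp [hc]
    rw [Finset.sum_congr rfl fun y _ => h y, Finset.sum_add_distrib]
    simp only [Finset.sum_ite_eq', Finset.mem_univ, if_true]
    ring
  simp only [Matrix.mulVec, dotProduct, gibbsP, Real.exp_zero]
  simp only [mul_assoc, ← Finset.mul_sum, Finset.sum_mul]
  rw [Finset.sum_comm]
  congr 1
  refine Finset.sum_congr rfl fun v _ => ?_
  rw [← key v]
  simp

lemma signSum_update (x : V → Bool) (v : V) (b : Bool) :
    signSum (Function.update x v b) = signSum x - boolSign (x v) + boolSign b := by
  unfold signSum
  rw [← Finset.add_sum_erase _ (fun u => boolSign (Function.update x v b u)) (Finset.mem_univ v),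
    ← Finset.add_sum_erase _ (fun u => boolSign (x u)) (Finset.mem_univ v)]
  have : ∑ u ∈ Finset.univ.erase v, boolSign (Function.update x v b u) =
      ∑ u ∈ Finset.univ.erase v, boolSign (x u) :=
    Finset.sum_congr rfl fun u hu => by
      rw [Function.update_of_ne (Finset.ne_of_mem_erase hu)]
  rw [this, Function.update_self]
  ring

lemma boolSign_sq (b : Bool) : boolSign b ^ 2 = 1 := by
  cases b <;> simp [boolSign]

lemma pow_mulVec_eigen {Ω : Type*} [Fintype Ω] [DecidableEq Ω] (P : Matrix Ω Ω ℝ) (g : Ω → ℝ)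
    (l : ℝ) (h : P *ᵥ g = l • g) (t : ℕ) : P ^ t *ᵥ g = l ^ t • g := by
  induction t with
  | zero => simp
  | succ t ih =>
    rw [pow_succ, ← Matrix.mulVec_mulVec, h, Matrix.mulVec_smul, ih, smul_smul, pow_succ, mul_comm]

lemma pow_nonneg_entries {Ω : Type*} [Fintype Ω] [DecidableEq Ω] (P : Matrix Ω Ω ℝ)
    (h : ∀ x y, 0 ≤ P x y) (t : ℕ) : ∀ x y, 0 ≤ (P ^ t) x y := by
  induction t with
  | zero =>
    intro x y
    rw [pow_zero, Matrix.one_apply]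
    split_ifs <;> norm_num
  | succ t ih =>
    intro x y
    rw [pow_succ, Matrix.mul_apply]
    exact Finset.sum_nonneg fun z _ => mul_nonneg (ih x z) (h z y)

lemma gibbsP_nonneg (E : (V → Bool) → ℝ) (x y : V → Bool) : 0 ≤ gibbsP E x y := by
  unfold gibbsP
  refine mul_nonneg (by positivity) (Finset.sum_nonneg fun v _ => ?_)
  split_ifs <;> positivity

lemma gibbsP_one [Nonempty V] :
    gibbsP (fun _ : V → Bool => (0 : ℝ)) *ᵥ (fun _ => 1) = (1 : ℝ) • (fun _ => (1 : ℝ)) := by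
  funext x
  rw [gibbsP_zero_mulVec]
  have : (Fintype.card V : ℝ) ≠ 0 := by exact_mod_cast Fintype.card_ne_zero
  simp [this]

lemma gibbsP_signSum [Nonempty V] :
    gibbsP (fun _ : V → Bool => (0 : ℝ)) *ᵥ signSum =
      (1 - 1 / (Fintype.card V : ℝ)) • signSum := by
  funext x
  rw [gibbsP_zero_mulVec]
  have : (Fintype.card V : ℝ) ≠ 0 := by exact_mod_cast Fintype.card_ne_zero
  have h : ∀ v, (signSum (Function.update x v true) + signSum (Function.update x v false)) / 2 =
      signSum x - boolSign (x v) := by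
    intro v
    rw [signSum_update, signSum_update, show boolSign true = 1 by simp [boolSign],
      show boolSign false = -1 by simp [boolSign]]
    ring
  simp only [h, Finset.sum_sub_distrib, Finset.sum_const, Finset.card_univ, nsmul_eq_mul,
    Pi.smul_apply, smul_eq_mul]
  rw [show ∑ v, boolSign (x v) = signSum x from rfl]
  field_simp

lemma gibbsP_signSum_sq [Nonempty V] :
    gibbsP (fun _ : V → Bool => (0 : ℝ)) *ᵥ (fun x => signSum x ^ 2 - (Fintype.card V : ℝ)) =
      (1 - 2 / (Fintype.card V : ℝ)) • (fun x => signSum x ^ 2 - (Fintype.card V : ℝ)) := by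
  funext x
  rw [gibbsP_zero_mulVec]
  have : (Fintype.card V : ℝ) ≠ 0 := by exact_mod_cast Fintype.card_ne_zero
  have h : ∀ v, ((signSum (Function.update x v true) ^ 2 - (Fintype.card V : ℝ)) +
      (signSum (Function.update x v false) ^ 2 - (Fintype.card V : ℝ))) / 2 =
      (signSum x ^ 2 + 2 - (Fintype.card V : ℝ)) - 2 * signSum x * boolSign (x v) := by
    intro v
    rw [signSum_update, signSum_update]
    have h2 := boolSign_sq (x v)
    simp only [boolSign] at *
    simp only [if_true, Bool.false_eq_true, if_false] at *
    linear_combination h2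
  simp only [h, Finset.sum_sub_distrib, Finset.sum_const, Finset.card_univ, nsmul_eq_mul,
    Pi.smul_apply, smul_eq_mul, ← Finset.mul_sum]
  rw [show ∑ v, boolSign (x v) = signSum x from rfl]
  field_simp
  ring

/-- Variance bound: from a constant state the second moment of the magnetization about its mean
`s (1 - 1/m)^t m`, with `s` the sign of the state, is at most the number `m` of coordinates. -/
lemma second_moment_le [Nonempty V] (hm : 2 ≤ Fintype.card V) (b : Bool) (t : ℕ) :
    ∑ y, (gibbsP (fun _ : V → Bool => (0 : ℝ)) ^ t) (fun _ => b) y *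
      (signSum y - boolSign b * ((1 - 1 / (Fintype.card V : ℝ)) ^ t * Fintype.card V)) ^ 2 ≤
      (Fintype.card V : ℝ) := by
  set P := gibbsP (fun _ : V → Bool => (0 : ℝ)) with hP
  set m : ℝ := (Fintype.card V : ℝ) with hmdef
  have hm2 : (2 : ℝ) ≤ m := by rw [hmdef]; exact_mod_cast hm
  have hx : signSum (fun _ : V => b) = boolSign b * m := by
    simp [signSum, hmdef, mul_comm]
  have e0 := congrFun (pow_mulVec_eigen P _ _ (gibbsP_one (V := V)) t) (fun _ => b)
  have e1 := congrFun (pow_mulVec_eigen P _ _ (gibbsP_signSum (V := V)) t) (fun _ => b)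
  have e2 := congrFun (pow_mulVec_eigen P _ _ (gibbsP_signSum_sq (V := V)) t) (fun _ => b)
  simp only [Matrix.mulVec, dotProduct, Pi.smul_apply, smul_eq_mul, ← hmdef, hx] at e0 e1 e2
  have hb := boolSign_sq b
  set s := boolSign b
  set a := s * ((1 - 1 / m) ^ t * m) with ha
  -- `(f - a)²` is a combination of the three eigenfunctions.
  have expand : ∀ y, (P ^ t) (fun _ => b) y * (signSum y - a) ^ 2 =
      (P ^ t) (fun _ => b) y * (signSum y ^ 2 - m) +
        (-2 * a) * ((P ^ t) (fun _ => b) y * signSum y) +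
        (m + a ^ 2) * ((P ^ t) (fun _ => b) y * 1) := fun y => by ring
  rw [Finset.sum_congr rfl fun y _ => expand y, Finset.sum_add_distrib, Finset.sum_add_distrib,
    ← Finset.mul_sum, ← Finset.mul_sum, e0, e1, e2]
  have h1 : (1 - 2 / m) ^ t ≤ ((1 - 1 / m) ^ t) ^ 2 := by
    rw [← pow_mul, mul_comm t 2, pow_mul]
    have h3 : 2 / m ≤ 1 := by rw [div_le_one (by linarith)]; exact hm2
    refine pow_le_pow_left₀ (by linarith) ?_ t
    have : (1 - 1 / m) ^ 2 = 1 - 2 / m + (1 / m) ^ 2 := by ring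
    rw [this]
    nlinarith [sq_nonneg (1 / m)]
  have h0 : 0 ≤ (1 - 2 / m) ^ t := by
    have h3 : 2 / m ≤ 1 := by rw [div_le_one (by linarith)]; exact hm2
    exact pow_nonneg (by linarith) t
  have ha2 : a ^ 2 = ((1 - 1 / m) ^ t) ^ 2 * m ^ 2 := by
    rw [ha, mul_pow, hb]; ring
  have e3 : (1 - 1 / m) ^ t * (s * m) = a := by rw [ha]; ring
  rw [e3, one_pow, mul_pow, hb]
  have h5 : (1 - 2 / m) ^ t * (1 * m ^ 2 - m) ≤ a ^ 2 := by
    rw [ha2]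
    nlinarith [mul_le_mul_of_nonneg_right h1 (sq_nonneg m), mul_nonneg h0 (by linarith : 0 ≤ m)]
  nlinarith

/-- Chebyshev: a set on which the magnetization is at distance at least `a` from its mean has
probability at most `m / a²`. -/
lemma tail_le [Nonempty V] (hm : 2 ≤ Fintype.card V) (b : Bool) (t : ℕ)
    (A : Finset (V → Bool)) (a : ℝ)
    (ha : a = (1 - 1 / (Fintype.card V : ℝ)) ^ t * Fintype.card V)
    (hA : ∀ y ∈ A, a ^ 2 ≤ (signSum y - boolSign b * a) ^ 2) :
    a ^ 2 * ∑ y ∈ A, (gibbsP (fun _ : V → Bool => (0 : ℝ)) ^ t) (fun _ => b) y ≤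
      Fintype.card V := by
  have hn := pow_nonneg_entries _ (gibbsP_nonneg (fun _ : V → Bool => (0 : ℝ))) t (fun _ => b)
  refine le_trans ?_ (second_moment_le hm b t)
  rw [← ha, Finset.mul_sum]
  refine le_trans (Finset.sum_le_sum fun y hy => ?_)
    (Finset.sum_le_univ_sum_of_nonneg fun y => mul_nonneg (hn y) (sq_nonneg _))
  rw [mul_comm]
  exact mul_le_mul_of_nonneg_left (hA y hy) (hn y)

/-- A mixed chain has forgotten the sign of its starting state. -/
lemma mixed_mean_le [Nonempty V] (hm : 2 ≤ Fintype.card V) (p : (V → Bool) → ℝ) (t : ℕ)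
    (h : MixedAt (gibbsP (fun _ : V → Bool => (0 : ℝ))) p t) :
    ((1 - 1 / (Fintype.card V : ℝ)) ^ t * Fintype.card V) ^ 2 ≤ 4 * Fintype.card V := by
  set P := gibbsP (fun _ : V → Bool => (0 : ℝ)) with hP
  set a : ℝ := (1 - 1 / (Fintype.card V : ℝ)) ^ t * Fintype.card V with ha
  have hm2 : (2 : ℝ) ≤ (Fintype.card V : ℝ) := by exact_mod_cast hm
  have ha0 : 0 ≤ a := by
    have h3 : 1 / (Fintype.card V : ℝ) ≤ 1 := by rw [div_le_one (by linarith)]; linarith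
    exact mul_nonneg (pow_nonneg (by linarith) t) (by linarith)
  let A : Finset (V → Bool) := Finset.univ.filter fun y => 0 < signSum y
  have t1 := tail_le hm true t Aᶜ a ha (by
    intro y hy
    have hy' : signSum y ≤ 0 := by simpa [A] using hy
    simp only [boolSign, if_true]
    nlinarith)
  have t2 := tail_le hm false t A a ha (by
    intro y hy
    have hy' : 0 < signSum y := by simpa [A] using hy
    simp only [boolSign, Bool.false_eq_true, if_false]
    nlinarith)
  rw [← hP] at t1 t2
  have e0 := congrFun (pow_mulVec_eigen P _ _ (gibbsP_one (V := V)) t) (fun _ => true)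
  simp only [Matrix.mulVec, dotProduct, Pi.smul_apply, smul_eq_mul, mul_one, one_pow] at e0
  rw [← Finset.sum_add_sum_compl A] at e0
  have m1 := (abs_le.mp (h (fun _ => true) A)).2
  have m2 := (abs_le.mp (h (fun _ => false) A)).1
  rw [Finset.sum_sub_distrib] at m1 m2
  have hsum : 1 / 2 ≤ ∑ y ∈ Aᶜ, (P ^ t) (fun _ => true) y + ∑ y ∈ A, (P ^ t) (fun _ => false) y := by
    linarith
  have := mul_le_mul_of_nonneg_left hsum (sq_nonneg a)
  rw [mul_add] at this
  linarith

end Hypercube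

/-- The time bound extracted from `mixed_mean_le` for `m = 2 n + 1` coordinates. -/
lemma time_bound (n t : ℕ) (hn : 4 ≤ n)
    (h : ((1 - 1 / ((2 * n + 1 : ℕ) : ℝ)) ^ t * ((2 * n + 1 : ℕ) : ℝ)) ^ 2 ≤
      4 * ((2 * n + 1 : ℕ) : ℝ)) :
    (1 / 4 : ℝ) * n * Real.log n ≤ t := by
  set m : ℝ := ((2 * n + 1 : ℕ) : ℝ) with hm
  have hn' : (4 : ℝ) ≤ n := by exact_mod_cast hn
  have hmn : m = 2 * n + 1 := by rw [hm]; push_cast; ring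
  have hm0 : 0 < m := by linarith
  have hq : 0 < 1 - 1 / m := by
    have : 1 / m < 1 := by rw [div_lt_one hm0]; linarith
    linarith
  have h1 : ((1 - 1 / m) ^ t) ^ 2 * m ≤ 4 := by
    have : (((1 - 1 / m) ^ t) ^ 2 * m) * m ≤ 4 * m := by
      calc _ = ((1 - 1 / m) ^ t * m) ^ 2 := by ring
        _ ≤ _ := h
    exact le_of_mul_le_mul_right this hm0
  have h2 := Real.log_le_log (by positivity) h1
  rw [Real.log_mul (by positivity) (by positivity), Real.log_pow, Real.log_pow] at h2
  -- `log q ≥ 1 - 1/q = -1/(m - 1)` for `q = 1 - 1/m`, and `m - 1 = 2 n`.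
  have h3 : -(1 / (2 * n : ℝ)) ≤ Real.log (1 - 1 / m) := by
    have := Real.one_sub_inv_le_log_of_pos hq
    have e : 1 - (1 - 1 / m)⁻¹ = -(1 / (2 * n : ℝ)) := by
      have : 1 - 1 / m = 2 * n / m := by field_simp; linarith
      rw [this, inv_div, hmn]
      field_simp
      ring
    linarith
  -- `m / 4 ≥ n / 2 ≥ √n` since `n ≥ 4`.
  have h4 : Real.log n / 2 ≤ Real.log m - Real.log 4 := by
    have : Real.log n + 2 * Real.log 4 ≤ 2 * Real.log m := by
      have e : Real.log n + 2 * Real.log 4 = Real.log (n * 4 ^ 2) := by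
        rw [Real.log_mul (by positivity) (by positivity), Real.log_pow]; norm_num
      have e' : 2 * Real.log m = Real.log (m ^ 2) := by rw [Real.log_pow]; norm_num
      rw [e, e']
      refine Real.log_le_log (by positivity) ?_
      rw [hmn]; nlinarith
    linarith
  have h5 : Real.log n / 2 ≤ t / n := by
    have : (t : ℝ) * (2 * -(1 / (2 * n : ℝ))) ≤ t * (2 * Real.log (1 - 1 / m)) := by gcongr
    have e : (t : ℝ) * (2 * -(1 / (2 * n : ℝ))) = - (t / n) := by field_simp
    push_cast at h2
    nlinarith
  rw [le_div_iff₀ (by linarith)] at h5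
  have : (0 : ℝ) ≤ t := by positivity
  nlinarith

/-- **Lower bound for the voting model, logical and ratio semantics.**  Fix `ω > 0`.  There
is a constant `c > 0` such that for all sufficiently large `n` there is a choice of weights
in `[−ω, ω]` for which Gibbs sampling on the voting model with logical (respectively, ratio)
semantics is not mixed before time `c·n·log n`. -/
theorem stmt12 (ω : ℝ) (hω : 0 < ω) :
    ∃ c : ℝ, 0 < c ∧ ∃ N : ℕ, ∀ n : ℕ, N ≤ n →
      (∃ (w : ℝ) (wT wF : Fin n → ℝ),
        w ∈ Set.Icc (-ω) ω ∧ (∀ i, wT i ∈ Set.Icc (-ω) ω) ∧ (∀ i, wF i ∈ Set.Icc (-ω) ω) ∧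
        ∀ t : ℕ, MixedAt (gibbsP (votingEnergyLogical n w wT wF))
            (gibbsPi (votingEnergyLogical n w wT wF)) t →
          c * n * Real.log n ≤ (t : ℝ)) ∧
      (∃ (w : ℝ) (wT wF : Fin n → ℝ),
        w ∈ Set.Icc (-ω) ω ∧ (∀ i, wT i ∈ Set.Icc (-ω) ω) ∧ (∀ i, wF i ∈ Set.Icc (-ω) ω) ∧
        ∀ t : ℕ, MixedAt (gibbsP (votingEnergyRatio n w wT wF))
            (gibbsPi (votingEnergyRatio n w wT wF)) t →
          c * n * Real.log n ≤ (t : ℝ)) := by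
  refine ⟨1 / 4, by norm_num, 4, fun n hn => ?_⟩
  have hcard : Fintype.card (VotingVar n) = 2 * n + 1 := by simp
  have h0 : (0 : ℝ) ∈ Set.Icc (-ω) ω := ⟨by linarith, hω.le⟩
  have main : ∀ (p : (VotingVar n → Bool) → ℝ) (t : ℕ),
      MixedAt (gibbsP (fun _ : VotingVar n → Bool => (0 : ℝ))) p t →
        (1 / 4 : ℝ) * n * Real.log n ≤ t := by
    intro p t h
    have := mixed_mean_le (by rw [hcard]; omega) p t h
    rw [hcard] at this
    exact time_bound n t hn this
  have hL : votingEnergyLogical n 0 (fun _ => 0) (fun _ => 0) = fun _ => 0 := by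
    funext x
    simp [votingEnergyLogical, votingPriors]
  have hR : votingEnergyRatio n 0 (fun _ => 0) (fun _ => 0) = fun _ => 0 := by
    funext x
    simp [votingEnergyRatio, votingPriors]
  refine ⟨⟨0, fun _ => 0, fun _ => 0, h0, fun _ => h0, fun _ => h0, fun t h => ?_⟩,
    ⟨0, fun _ => 0, fun _ => 0, h0, fun _ => h0, fun _ => h0, fun t h => ?_⟩⟩
  · rw [hL] at h
    exact main _ t h
  · rw [hR] at h
    exact main _ t h
end

section
/- For every hypergraph G, the hierarchy width of G equals the minimum width of a hierarchy decomposition of G. -/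
/-- A hierarchy decomposition of the hypergraph with hyperedges `E` (hyperedge `e` has
vertex set `dep e`): a rooted tree whose nodes `v` are labeled with sets `χ v` of hyperedges
such that (1) every hyperedge occurs in some label, (2) the nodes whose labels contain a
given hyperedge are connected along tree paths, (3) any two intersecting hyperedges occur
together in some label, and (4) the label of a parent is contained in the label of each of
its children (a node `u` is the parent of `v` if they are adjacent and `u` lies on the
unique path from `v` to the root). -/
structure HierDecomp {α ι : Type*} (dep : ι → Finset α) (E : Finset ι) where
  τ : Type
  fin : Fintype τ
  T : SimpleGraph τ
  tree : T.IsTree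
  root : τ
  χ : τ → Finset ι
  sub : ∀ v, χ v ⊆ E
  cover : ∀ e ∈ E, ∃ v, e ∈ χ v
  pathconn : ∀ e : ι, ∀ u v : τ, e ∈ χ u → e ∈ χ v →
    ∀ p : T.Walk u v, p.IsPath → ∀ w ∈ p.support, e ∈ χ w
  meet : ∀ e ∈ E, ∀ f ∈ E, (∃ a, a ∈ dep e ∧ a ∈ dep f) → ∃ v, e ∈ χ v ∧ f ∈ χ v
  parentMono : ∀ u v : τ, T.Adj u v →
    (∀ p : T.Walk v root, p.IsPath → u ∈ p.support) → χ u ⊆ χ v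

/-- The width of a hierarchy decomposition: the size of its largest label. -/
noncomputable def HierDecomp.width {α ι : Type*} {dep : ι → Finset α} {E : Finset ι}
    (D : HierDecomp dep E) : ℕ :=
  letI := D.fin
  Finset.univ.sup fun v => (D.χ v).card

/-! ### The recursion for the hierarchy width -/

open Classical in
/-- The set of hyperedges in the connected component of `e` within `E`. -/
noncomputable def edgeComp {α ι : Type*} (dep : ι → Finset α) (E : Finset ι) (e : ι) : Finset ι :=
  E.filter fun f => EdgeConn dep E e f

theorem mem_edgeComp {α ι : Type*} {dep : ι → Finset α} {E : Finset ι} {e f : ι} :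
    f ∈ edgeComp dep E e ↔ f ∈ E ∧ EdgeConn dep E e f := by
  simp [edgeComp]

theorem EdgeConn.symm {α ι : Type*} {dep : ι → Finset α} {E : Finset ι} {e f : ι}
    (h : EdgeConn dep E e f) : EdgeConn dep E f e := by
  induction h with
  | refl => exact .refl
  | tail _ h ih =>
    obtain ⟨h1, h2, v, h3, h4⟩ := h
    exact .head ⟨h2, h1, v, h4, h3⟩ ih

theorem edgeComp_eq {α ι : Type*} {dep : ι → Finset α} {E : Finset ι} {e f : ι}
    (h : EdgeConn dep E e f) : edgeComp dep E e = edgeComp dep E f := by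
  ext g
  simp only [mem_edgeComp]
  exact ⟨fun ⟨a, b⟩ => ⟨a, h.symm.trans b⟩, fun ⟨a, b⟩ => ⟨a, h.trans b⟩⟩

theorem hw_le_iff {α ι : Type*} [DecidableEq ι] (dep : ι → Finset α) (E : Finset ι) (k : ℕ) :
    hw dep E ≤ k ↔ ∀ e ∈ E, ∃ f ∈ edgeComp dep E e,
      hw dep ((edgeComp dep E e).erase f) + 1 ≤ k := by
  rw [hw, Finset.sup_le_iff]
  refine forall₂_congr fun e he => ?_
  have hmem : e ∈ edgeComp dep E e := mem_edgeComp.2 ⟨he, .refl⟩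
  change 1 + ((edgeComp dep E e).attach.inf fun f =>
      ((hw dep ((edgeComp dep E e).erase f.1) : ℕ) : ℕ∞)).toNat ≤ k ↔ _
  constructor
  · intro h
    obtain ⟨f, -, hf⟩ := Finset.exists_mem_eq_inf (edgeComp dep E e).attach ⟨⟨e, hmem⟩, by simp⟩
      (fun f => ((hw dep ((edgeComp dep E e).erase f.1) : ℕ) : ℕ∞))
    rw [hf, ENat.toNat_natCast] at h
    exact ⟨f.1, f.2, by omega⟩
  · rintro ⟨f, hf, h⟩
    have h1 : ((edgeComp dep E e).attach.inf fun f =>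
      ((hw dep ((edgeComp dep E e).erase f.1) : ℕ) : ℕ∞)) ≤
        ((hw dep ((edgeComp dep E e).erase f) : ℕ) : ℕ∞) :=
      Finset.inf_le (f := fun f : edgeComp dep E e =>
        ((hw dep ((edgeComp dep E e).erase f.1) : ℕ) : ℕ∞)) (Finset.mem_attach _ ⟨f, hf⟩)
    have h2 := ENat.toNat_le_toNat h1 (ENat.natCast_ne_top _)
    rw [ENat.toNat_natCast] at h2
    omega

/-! ### Lower bound: every decomposition has width at least the hierarchy width -/

open Classical in
/-- If the hyperedges are assigned nonempty sets `S e` forming a laminar family, with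
intersecting hyperedges receiving intersecting sets, then the maximal depth of the family bounds
the hierarchy width. The point is that within a connected component `C` the largest `S f` contains
every other `S g`, so erasing `f` lowers the depth everywhere on `C`. -/
theorem hw_le_of_laminar {α ι τ : Type*} [DecidableEq ι] [Finite τ] (dep : ι → Finset α)
    (S : ι → Set τ) (lam : ∀ e f, (S e ∩ S f).Nonempty → S e ⊆ S f ∨ S f ⊆ S e)
    (E : Finset ι) (k : ℕ) (ne : ∀ e ∈ E, (S e).Nonempty)
    (meet : ∀ e ∈ E, ∀ f ∈ E, (∃ a, a ∈ dep e ∧ a ∈ dep f) → (S e ∩ S f).Nonempty)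
    (depth : ∀ v, (E.filter fun e => v ∈ S e).card ≤ k) : hw dep E ≤ k := by
  induction hn : E.card using Nat.strong_induction_on generalizing E k with
  | _ n ih =>
  rw [hw_le_iff]
  intro e he
  have hmem : e ∈ edgeComp dep E e := mem_edgeComp.2 ⟨he, .refl⟩
  obtain ⟨f, hf, hmax⟩ := Finset.exists_max_image (edgeComp dep E e)
    (fun f => (S f).ncard) ⟨e, hmem⟩
  have hfE := mem_edgeComp.1 hf
  have key : ∀ g, EdgeConn dep E f g → S g ⊆ S f := by
    intro g hg
    induction hg with
    | refl => exact subset_rfl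
    | @tail b c hb hbc ih' =>
      obtain ⟨v, hv1, hv2⟩ := meet b hbc.1 c hbc.2.1 hbc.2.2
      rcases lam c f ⟨v, hv2, ih' hv1⟩ with h | h
      · exact h
      · have hc : c ∈ edgeComp dep E e :=
          mem_edgeComp.2 ⟨hbc.2.1, hfE.2.trans (hb.tail hbc)⟩
        exact (Set.eq_of_subset_of_ncard_le h (hmax c hc) (Set.toFinite _)).ge
  have key' : ∀ g ∈ edgeComp dep E e, S g ⊆ S f := fun g hg =>
    key g (hfE.2.symm.trans (mem_edgeComp.1 hg).2)
  have hkpos : 1 ≤ k := by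
    obtain ⟨v, hv⟩ := ne f hfE.1
    refine le_trans ?_ (depth v)
    exact Finset.card_pos.2 ⟨f, by simp [hfE.1, hv]⟩
  have hsub : (edgeComp dep E e).erase f ⊆ E := fun g hg =>
    (mem_edgeComp.1 (Finset.mem_of_mem_erase hg)).1
  refine ⟨f, hf, ?_⟩
  have := ih _ ?_ ((edgeComp dep E e).erase f) (k - 1) (fun g hg => ne g (hsub hg))
    (fun g hg h hh => meet g (hsub hg) h (hsub hh)) ?_ rfl
  · omega
  · rw [← hn]
    exact Finset.card_lt_card ⟨hsub, fun h => by simpa using h hfE.1⟩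
  · intro v
    by_cases hv : v ∈ S f
    · have h1 : ((edgeComp dep E e).erase f).filter (fun g => v ∈ S g) ⊆
          (E.filter fun g => v ∈ S g).erase f := by
        intro g hg
        simp only [Finset.mem_filter, Finset.mem_erase] at hg ⊢
        exact ⟨hg.1.1, (mem_edgeComp.1 hg.1.2).1, hg.2⟩
      have h2 := Finset.card_le_card h1
      rw [Finset.card_erase_of_mem (by simp [hfE.1, hv])] at h2
      have := depth v
      omega
    · rw [Finset.filter_false_of_mem]
      · simp
      · intro g hg hvg
        exact hv (key' g (Finset.mem_of_mem_erase hg) hvg)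

/-- A tree with a root has a parent map, here with the convention that the root is its own
parent, together with a height decreasing along it. -/
theorem SimpleGraph.IsTree.exists_parent {τ : Type*} {T : SimpleGraph τ} (hT : T.IsTree)
    (root : τ) : ∃ (par : τ → τ) (d : τ → ℕ), par root = root ∧
      (∀ x, x ≠ root → d (par x) < d x) ∧
      (∀ x y, T.Adj x y → par x = y ∨ par y = x) ∧
      (∀ x, x ≠ root → T.Adj (par x) x ∧
        ∀ p : T.Walk x root, p.IsPath → par x ∈ p.support) := by
  choose P hP hPu using fun x => hT.existsUnique_path x root
  refine ⟨fun x => (P x).snd, fun x => (P x).length, ?_, ?_, ?_, ?_⟩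
  · simp only
    rw [← hPu root .nil .nil]
    rfl
  · intro x hx
    have hnil : ¬ (P x).Nil := fun h => hx h.eq
    have h1 : (P x).tail = P (P x).snd := hPu _ _ (hP x).tail
    have h2 := SimpleGraph.Walk.length_tail_add_one hnil
    rw [h1] at h2
    simp only
    omega
  · intro x y hxy
    by_cases hy : y ∈ (P x).support
    · exact .inl (hT.isAcyclic.eq_snd_of_adj_start (hP x) hxy hy).symm
    · right
      have h1 := hPu y (.cons hxy.symm (P x)) ((hP x).cons hy)
      simp only
      rw [← h1]
      simp
  · intro x hx
    have hnil : ¬ (P x).Nil := fun h => hx h.eq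
    refine ⟨((P x).adj_snd hnil).symm, fun p hp => ?_⟩
    rw [hPu x p hp]
    exact (P x).getVert_mem_support 1

/-- The nodes carrying a given hyperedge are the descendants of a single node, and two such sets
of descendants are nested or disjoint. -/
theorem HierDecomp.laminar {α ι : Type*} {dep : ι → Finset α} {E : Finset ι}
    (D : HierDecomp dep E) (e f : ι)
    (h : ({v | e ∈ D.χ v} ∩ {v | f ∈ D.χ v} : Set D.τ).Nonempty) :
    ({v | e ∈ D.χ v} : Set D.τ) ⊆ {v | f ∈ D.χ v} ∨
      ({v | f ∈ D.χ v} : Set D.τ) ⊆ {v | e ∈ D.χ v} := by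
  let := D.fin
  obtain ⟨par, d, hroot, hd, hadj, hpar⟩ := D.tree.exists_parent D.root
  have hmono : ∀ x, D.χ (par x) ⊆ D.χ x := by
    intro x
    by_cases hx : x = D.root
    · rw [hx, hroot]
    · exact D.parentMono _ _ (hpar x hx).1 (hpar x hx).2
  have hmono' : ∀ n x, D.χ (par^[n] x) ⊆ D.χ x := by
    intro n
    induction n with
    | zero => intro x; exact subset_rfl
    | succ n ih => intro x; exact (ih (par x)).trans (hmono x)
  -- `t` is the topmost node carrying `e`
  have top : ∀ e v, e ∈ D.χ v → ∃ t, ∀ w, e ∈ D.χ w ↔ ∃ n, par^[n] w = t := by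
    classical
    intro e v hv
    obtain ⟨t, ht, hmin⟩ := Finset.exists_min_image
      (Finset.univ.filter fun w => e ∈ D.χ w) d ⟨v, by simpa using hv⟩
    simp only [Finset.mem_filter, Finset.mem_univ, true_and] at ht hmin
    refine ⟨t, fun w => ⟨fun hw => ?_, ?_⟩⟩
    · obtain ⟨p, hp, -⟩ := D.tree.existsUnique_path w t
      have hsup := D.pathconn e w t hw ht p hp
      clear hp hw hv
      induction p with
      | nil => exact ⟨0, rfl⟩
      | @cons a b c hab p ih =>
        obtain ⟨n, hn⟩ := ih ht hmin fun w hw => hsup w (by simp [hw])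
        rcases hadj a b hab with h | h
        · exact ⟨n + 1, by simpa [h] using hn⟩
        · cases n with
          | succ m => exact ⟨m, by simpa [h] using hn⟩
          | zero =>
            exfalso
            simp only [Function.iterate_zero, id] at hn
            subst hn
            by_cases hb : b = D.root
            · subst hb
              exact hab.ne (h.symm.trans hroot)
            · have h1 := hd b hb
              have h2 := hmin a (hsup a (by simp))
              rw [h] at h1
              omega
    · rintro ⟨n, rfl⟩
      exact hmono' n w ht
  obtain ⟨v, hve, hvf⟩ := h
  obtain ⟨s, hs⟩ := top e v hve
  obtain ⟨t, ht⟩ := top f v hvf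
  obtain ⟨n, hn⟩ := (hs v).1 hve
  obtain ⟨m, hm⟩ := (ht v).1 hvf
  rcases le_total n m with h | h
  · left
    intro w hw
    obtain ⟨l, hl⟩ := (hs w).1 hw
    refine (ht w).2 ⟨(m - n) + l, ?_⟩
    rw [Function.iterate_add_apply, hl, ← hn, ← Function.iterate_add_apply, Nat.sub_add_cancel h, hm]
  · right
    intro w hw
    obtain ⟨l, hl⟩ := (ht w).1 hw
    refine (hs w).2 ⟨(n - m) + l, ?_⟩
    rw [Function.iterate_add_apply, hl, ← hm, ← Function.iterate_add_apply, Nat.sub_add_cancel h, hn]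

/-! ### Upper bound: elimination forests -/

/-- An elimination forest of depth at most `k` on the hyperedges `E`, presented by its ancestor
sets: `A e` is the set of ancestors of `e`, including `e` itself. Intersecting hyperedges must be
in ancestor-descendant relation. -/
structure ElimForest {α ι : Type*} (dep : ι → Finset α) (E : Finset ι) (k : ℕ)
    (A : ι → Finset ι) : Prop where
  sub : ∀ e ∈ E, A e ⊆ E
  self : ∀ e ∈ E, e ∈ A e
  trans : ∀ e ∈ E, ∀ a ∈ A e, A a ⊆ A e
  antisymm : ∀ e ∈ E, ∀ a ∈ A e, e ∈ A a → a = e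
  chain : ∀ e ∈ E, ∀ a ∈ A e, ∀ b ∈ A e, a ∈ A b ∨ b ∈ A a
  meet : ∀ e ∈ E, ∀ f ∈ E, (∃ a, a ∈ dep e ∧ a ∈ dep f) → e ∈ A f ∨ f ∈ A e
  card : ∀ e ∈ E, (A e).card ≤ k

/-- Following the recursion defining `hw`, the hyperedge removed from a component becomes the root
of a tree whose remaining part is the elimination forest of the rest of that component. -/
theorem exists_elimForest {α ι : Type*} [DecidableEq ι] (dep : ι → Finset α) (E : Finset ι)
    (k : ℕ) (h : hw dep E ≤ k) : ∃ A, ElimForest dep E k A := by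
  induction hn : E.card using Nat.strong_induction_on generalizing E k with
  | _ n ih =>
  -- The choices depend on the component `C` only, hence are shared by all its members.
  have step : ∀ C : Finset ι, (∃ e ∈ E, C = edgeComp dep E e) → ∃ f : ι, ∃ A : ι → Finset ι,
      f ∈ C ∧ 1 ≤ k ∧ ElimForest dep (C.erase f) (k - 1) A := by
    rintro C ⟨e, he, rfl⟩
    obtain ⟨f, hf, hk⟩ := (hw_le_iff dep E k).1 h e he
    have hlt : ((edgeComp dep E e).erase f).card < n := by
      rw [← hn]
      refine lt_of_lt_of_le (Finset.card_erase_lt_of_mem hf) (Finset.card_le_card ?_)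
      exact fun g hg => (mem_edgeComp.1 hg).1
    obtain ⟨A, hA⟩ := ih _ hlt _ (k - 1) (by omega) rfl
    exact ⟨f, A, hf, by omega, hA⟩
  rcases isEmpty_or_nonempty ι with hι | hι
  · refine ⟨fun _ => ∅, ⟨?_, ?_, ?_, ?_, ?_, ?_, ?_⟩⟩ <;> exact fun e => hι.elim e
  choose! r B hr hk hB using step
  let C := edgeComp dep E
  have hC : ∀ e ∈ E, e ∈ C e := fun e he => mem_edgeComp.2 ⟨he, .refl⟩
  have hCE : ∀ e, C e ⊆ E := fun e g hg => (mem_edgeComp.1 hg).1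
  have hCeq : ∀ e, ∀ a ∈ C e, C a = C e := fun e a ha => (edgeComp_eq (mem_edgeComp.1 ha).2).symm
  have hr' : ∀ e ∈ E, r (C e) ∈ C e := fun e he => hr _ ⟨e, he, rfl⟩
  have hB' : ∀ e ∈ E, ElimForest dep ((C e).erase (r (C e))) (k - 1) (B (C e)) :=
    fun e he => hB _ ⟨e, he, rfl⟩
  have hk' : ∀ e ∈ E, 1 ≤ k := fun e he => hk (C e) ⟨e, he, rfl⟩
  let A : ι → Finset ι := fun e =>
    if e = r (C e) then {e} else insert (r (C e)) (B (C e) e)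
  have hAr : ∀ e, e = r (C e) → A e = {e} := fun e he => if_pos he
  have hAn : ∀ e, e ≠ r (C e) → A e = insert (r (C e)) (B (C e) e) := fun e he => if_neg he
  have hAC : ∀ e ∈ E, A e ⊆ C e := by
    intro e he
    by_cases h1 : e = r (C e)
    · rw [hAr e h1]; simpa using hC e he
    · rw [hAn e h1]
      refine Finset.insert_subset (hr' e he) ?_
      exact ((hB' e he).sub e (by simp [h1, hC e he])).trans (Finset.erase_subset _ _)
  -- Everything takes place inside a single component `C e` with root `r (C e)`.
  have local_A : ∀ e ∈ E, ∀ a ∈ C e, (a = r (C e) ∧ A a = {r (C e)}) ∨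
      (a ∈ (C e).erase (r (C e)) ∧ A a = insert (r (C e)) (B (C e) a)) := by
    intro e he a ha
    have h0 := hCeq e a ha
    by_cases h1 : a = r (C e)
    · left
      refine ⟨h1, ?_⟩
      rw [hAr a (by rw [h0]; exact h1), ← h1]
    · right
      refine ⟨by simp [h1, ha], ?_⟩
      rw [hAn a (by rw [h0]; exact h1), h0]
  refine ⟨A, ⟨fun e he => (hAC e he).trans (hCE e), ?_, ?_, ?_, ?_, ?_, ?_⟩⟩
  · intro e he
    rcases local_A e he e (hC e he) with ⟨h1, h2⟩ | ⟨h1, h2⟩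
    · rw [h2]; simpa using h1
    · rw [h2]; exact Finset.mem_insert_of_mem ((hB' e he).self e h1)
  · intro e he a ha
    have F := hB' e he
    have haC := hAC e he ha
    have L := local_A e he
    rcases L e (hC e he) with ⟨h1, h2⟩ | ⟨h1, h2⟩ <;> rcases L a haC with ⟨h3, h4⟩ | ⟨h3, h4⟩ <;>
      rw [h2] at ha ⊢ <;> rw [h4]
    · rw [Finset.mem_singleton] at ha
      exact absurd ha (Finset.ne_of_mem_erase h3)
    · simp
    · rcases Finset.mem_insert.1 ha with h5 | h5
      · exact absurd h5 (Finset.ne_of_mem_erase h3)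
      · exact Finset.insert_subset_insert _ (F.trans e h1 a h5)
  · intro e he a ha hea
    have F := hB' e he
    have haC := hAC e he ha
    have L := local_A e he
    rcases L e (hC e he) with ⟨h1, h2⟩ | ⟨h1, h2⟩ <;> rcases L a haC with ⟨h3, h4⟩ | ⟨h3, h4⟩ <;>
      rw [h2] at ha <;> rw [h4] at hea
    · rw [h1, h3]
    · rw [Finset.mem_singleton] at ha
      exact absurd ha (Finset.ne_of_mem_erase h3)
    · rw [Finset.mem_singleton] at hea
      exact absurd hea (Finset.ne_of_mem_erase h1)
    · rcases Finset.mem_insert.1 ha with h5 | h5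
      · exact absurd h5 (Finset.ne_of_mem_erase h3)
      rcases Finset.mem_insert.1 hea with h6 | h6
      · exact absurd h6 (Finset.ne_of_mem_erase h1)
      exact F.antisymm e h1 a h5 h6
  · intro e he a ha b hb
    have F := hB' e he
    have haC := hAC e he ha
    have hbC := hAC e he hb
    have L := local_A e he
    rcases L a haC with ⟨h3, h4⟩ | ⟨h3, h4⟩
    · left
      rcases L b hbC with ⟨h5, h6⟩ | ⟨h5, h6⟩ <;> rw [h6, h3] <;> simp
    rcases L b hbC with ⟨h5, h6⟩ | ⟨h5, h6⟩
    · right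
      rw [h4, h5]; simp
    rcases L e (hC e he) with ⟨h1, h2⟩ | ⟨h1, h2⟩ <;> rw [h2] at ha hb
    · rw [Finset.mem_singleton] at ha
      exact absurd ha (Finset.ne_of_mem_erase h3)
    · have ha' := Finset.mem_of_mem_insert_of_ne ha (Finset.ne_of_mem_erase h3)
      have hb' := Finset.mem_of_mem_insert_of_ne hb (Finset.ne_of_mem_erase h5)
      rw [h4, h6]
      exact (F.chain e h1 a ha' b hb').imp Finset.mem_insert_of_mem Finset.mem_insert_of_mem
  · intro e he f hf hef
    have F := hB' e he
    have L := local_A e he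
    have hfC : f ∈ C e := mem_edgeComp.2 ⟨hf, .single ⟨he, hf, hef⟩⟩
    rcases L e (hC e he) with ⟨h1, h2⟩ | ⟨h1, h2⟩
    · left
      rcases L f hfC with ⟨h5, h6⟩ | ⟨h5, h6⟩ <;> rw [h6, ← h1] <;> simp
    rcases L f hfC with ⟨h5, h6⟩ | ⟨h5, h6⟩
    · right
      rw [h2, ← h5]; simp
    · rw [h2, h6]
      exact (F.meet e h1 f h5 hef).imp Finset.mem_insert_of_mem Finset.mem_insert_of_mem
  · intro e he
    have := hk' e he
    rcases local_A e he e (hC e he) with ⟨h1, h2⟩ | ⟨h1, h2⟩ <;> rw [h2]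
    · simpa using this
    · have h3 := (hB' e he).card e h1
      have h4 := Finset.card_insert_le (r (C e)) (B (C e) e)
      omega

/-! ### Upper bound: from parent maps to decompositions -/

/-- The graph joining every `x` to `par x`. -/
def parGraph {τ : Type*} (par : τ → τ) : SimpleGraph τ := SimpleGraph.fromRel fun x y => par x = y

theorem parGraph_adj {τ : Type*} {par : τ → τ} {x y : τ} :
    (parGraph par).Adj x y ↔ x ≠ y ∧ (par x = y ∨ par y = x) := by
  simp [parGraph]

theorem exists_walk_root {τ : Type*} (par : τ → τ) (d : τ → ℕ) (root : τ)
    (hd : ∀ x, x ≠ root → d (par x) < d x) (x : τ) :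
    ∃ p : (parGraph par).Walk x root, ∀ w ∈ p.support, d w ≤ d x := by
  induction hn : d x using Nat.strong_induction_on generalizing x with
  | _ n ih =>
  by_cases hx : x = root
  · subst hx
    exact ⟨.nil, by simp [hn]⟩
  · have h1 := hd x hx
    obtain ⟨p, hp⟩ := ih _ (hn ▸ h1) (par x) rfl
    have hadj : (parGraph par).Adj x (par x) :=
      parGraph_adj.2 ⟨fun h => by rw [← h] at h1; omega, .inl rfl⟩
    refine ⟨.cons hadj p, fun w hw => ?_⟩
    rw [SimpleGraph.Walk.support_cons, List.mem_cons] at hw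
    rcases hw with rfl | hw
    · omega
    · have := hp w hw
      omega

theorem parGraph_isTree {τ : Type*} [Finite τ] (par : τ → τ) (d : τ → ℕ) (root : τ)
    (hroot : par root = root) (hd : ∀ x, x ≠ root → d (par x) < d x) :
    (parGraph par).IsTree := by
  have hconn : (parGraph par).Connected := by
    have : Nonempty τ := ⟨root⟩
    refine ⟨fun x y => ?_⟩
    obtain ⟨p, -⟩ := exists_walk_root par d root hd x
    obtain ⟨q, -⟩ := exists_walk_root par d root hd y
    exact ⟨p.append q.reverse⟩
  rw [SimpleGraph.isTree_iff_connected_and_card]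
  refine ⟨hconn, le_antisymm ?_ hconn.card_vert_le_card_edgeSet_add_one⟩
  -- Every edge is `{x, par x}` for some non-root `x`.
  have hsub : (parGraph par).edgeSet ⊆ (fun x => s(x, par x)) '' {x | x ≠ root} := by
    intro z
    induction z with
    | _ x y =>
    intro hz
    obtain ⟨hne, h | h⟩ := parGraph_adj.1 ((SimpleGraph.mem_edgeSet _).1 hz)
    · exact ⟨x, fun hx => hne (by rw [← h, hx, hroot]), by simp [h]⟩
    · exact ⟨y, fun hy => hne (by rw [← h, hy, hroot]), by simp [h, Sym2.eq_swap]⟩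
  have h1 := Set.ncard_le_ncard hsub (Set.toFinite _)
  have h2 := Set.ncard_image_le (f := fun x => s(x, par x)) (Set.toFinite {x | x ≠ root})
  have h3 : ({x | x ≠ root} : Set τ).ncard + 1 = Nat.card τ := by
    have : ({x | x ≠ root} : Set τ) = {root}ᶜ := rfl
    rw [this, ← Set.ncard_add_ncard_compl {root}, Set.ncard_singleton, add_comm]
  rw [Nat.card_coe_set_eq]
  omega

/-- A rooted tree given by a parent map, with labels increasing away from the root, such that
each hyperedge `e` enters the labels only at the node `t e`, is a hierarchy decomposition. -/
theorem exists_hierDecomp_of_parent {α ι : Type*} {dep : ι → Finset α} {E : Finset ι} {k : ℕ}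
    {V : Type} [Finite V] (par : V → V) (d : V → ℕ) (root : V)
    (hroot : par root = root) (hd : ∀ x, x ≠ root → d (par x) < d x)
    (χ : V → Finset ι) (t : ι → V) (hχroot : χ root = ∅)
    (hmono : ∀ x, χ (par x) ⊆ χ x) (ht : ∀ x, ∀ e ∈ χ x, x = t e ∨ e ∈ χ (par x))
    (hsub : ∀ x, χ x ⊆ E) (hcover : ∀ e ∈ E, ∃ v, e ∈ χ v)
    (hmeet : ∀ e ∈ E, ∀ f ∈ E, (∃ a, a ∈ dep e ∧ a ∈ dep f) → ∃ v, e ∈ χ v ∧ f ∈ χ v)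
    (hcard : ∀ x, (χ x).card ≤ k) : ∃ D : HierDecomp dep E, D.width ≤ k := by
  classical
  have hT := parGraph_isTree par d root hroot hd
  have walk_top : ∀ e x, e ∈ χ x →
      ∃ p : (parGraph par).Walk x (t e), ∀ w ∈ p.support, e ∈ χ w := by
    intro e x hx
    induction hn : d x using Nat.strong_induction_on generalizing x with
    | _ n ih =>
    have hxr : x ≠ root := by
      rintro rfl
      simp [hχroot] at hx
    have h1 := hd x hxr
    rcases ht x e hx with h | h
    · subst h
      exact ⟨.nil, by simpa using hx⟩
    · obtain ⟨p, hp⟩ := ih _ (hn ▸ h1) (par x) h rfl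
      have hadj : (parGraph par).Adj x (par x) :=
        parGraph_adj.2 ⟨fun h => by rw [← h] at h1; omega, .inl rfl⟩
      refine ⟨.cons hadj p, fun w hw => ?_⟩
      rw [SimpleGraph.Walk.support_cons, List.mem_cons] at hw
      rcases hw with rfl | hw
      · exact hx
      · exact hp w hw
  refine ⟨{ τ := V, fin := Fintype.ofFinite V, T := parGraph par, tree := hT, root := root, χ := χ,
            sub := hsub, cover := hcover, meet := hmeet, pathconn := ?_, parentMono := ?_ }, ?_⟩
  · -- The path is contained in the walk from `u` up to `t e` and down to `v`.
    intro e u v hu hv p hp w hw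
    obtain ⟨p₁, h₁⟩ := walk_top e u hu
    obtain ⟨p₂, h₂⟩ := walk_top e v hv
    have huniq := (hT.existsUnique_path u v).unique hp (p₁.append p₂.reverse).bypass_isPath
    rw [huniq] at hw
    have hw' := SimpleGraph.Walk.support_bypass_subset_support _ hw
    rw [SimpleGraph.Walk.mem_support_append_iff, SimpleGraph.Walk.support_reverse,
      List.mem_reverse] at hw'
    exact hw'.elim (h₁ w) (h₂ w)
  · intro u v hadj hpath
    obtain ⟨hne, h | h⟩ := parGraph_adj.1 hadj
    · -- If `v` were the parent of `u`, the path from `v` to the root would avoid `u`.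
      exfalso
      obtain ⟨p, hp⟩ := exists_walk_root par d root hd v
      have h1 := hp u (SimpleGraph.Walk.support_bypass_subset_support _
        (hpath p.bypass p.bypass_isPath))
      have hur : u ≠ root := by
        rintro rfl
        exact hne (hroot.symm.trans h)
      have h2 := hd u hur
      rw [h] at h2
      omega
    · rw [← h]
      exact hmono v
  · exact Finset.sup_le fun v _ => hcard v

/-- The forest becomes a decomposition after adding a root with empty label, the node of `e` being
labeled by the ancestor set of `e`. -/
theorem ElimForest.exists_hierDecomp {α ι : Type*} {dep : ι → Finset α} {E : Finset ι}
    {k : ℕ} {A : ι → Finset ι} (F : ElimForest dep E k A) :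
    ∃ D : HierDecomp dep E, D.width ≤ k := by
  classical
  let lab : Option E → Finset ι := fun x => x.elim ∅ fun e => A e
  -- The parent of `e` is its lowest proper ancestor, if there is any.
  have hpar : ∀ e : E, ∃ p : Option E, lab p = (A e).erase e := by
    rintro ⟨e, he⟩
    rcases ((A e).erase e).eq_empty_or_nonempty with h | h
    · exact ⟨none, h.symm⟩
    obtain ⟨p, hp, hmax⟩ := Finset.exists_max_image _ (fun a => (A a).card) h
    obtain ⟨hpe, hpA⟩ := Finset.mem_erase.1 hp
    have hpE := F.sub e he hpA
    refine ⟨some ⟨p, hpE⟩, ?_⟩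
    change A p = (A e).erase e
    ext a
    constructor
    · intro ha
      refine Finset.mem_erase.2 ⟨?_, F.trans e he p hpA ha⟩
      rintro rfl
      exact hpe (F.antisymm a he p hpA ha)
    · intro ha
      have haA := Finset.mem_of_mem_erase ha
      rcases F.chain e he a haA p hpA with h1 | h1
      · exact h1
      · have haE := F.sub e he haA
        rw [Finset.eq_of_subset_of_card_le (F.trans a haE p h1) (hmax a ha)]
        exact F.self a haE
  choose q hq using hpar
  let par : Option E → Option E := fun x => x.elim none q
  let t : ι → Option E := fun e => if h : e ∈ E then some ⟨e, h⟩ else none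
  -- Nodes are renamed to `Fin n`, since a decomposition has its nodes in `Type`.
  obtain ⟨n, ⟨φ⟩⟩ := Finite.exists_equiv_fin (Option E)
  refine exists_hierDecomp_of_parent (V := Fin n) (fun x => φ (par (φ.symm x)))
    (fun x => (lab (φ.symm x)).card) (φ none) (by simp [par]) ?_ (fun x => lab (φ.symm x))
    (fun e => φ (t e)) (by simp [lab]) ?_ ?_ ?_ ?_ ?_ ?_
  · intro x hx
    obtain ⟨x, rfl⟩ := φ.surjective x
    simp only [Equiv.symm_apply_apply]
    rcases x with _ | e
    · exact absurd rfl hx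
    · change (lab (q e)).card < (A e).card
      rw [hq]
      exact Finset.card_erase_lt_of_mem (F.self e e.2)
  · intro x
    obtain ⟨x, rfl⟩ := φ.surjective x
    simp only [Equiv.symm_apply_apply]
    rcases x with _ | e
    · exact subset_rfl
    · change lab (q e) ⊆ A e
      rw [hq]
      exact Finset.erase_subset _ _
  · intro x f hf
    obtain ⟨x, rfl⟩ := φ.surjective x
    simp only [Equiv.symm_apply_apply] at hf ⊢
    rcases x with _ | e
    · simp [lab] at hf
    · by_cases hfe : f = e
      · left
        subst hfe
        simp [t]
      · right
        change f ∈ lab (q e)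
        rw [hq]
        exact Finset.mem_erase.2 ⟨hfe, hf⟩
  · intro x
    rcases φ.symm x with _ | e
    · simp [lab]
    · exact F.sub e e.2
  · intro e he
    refine ⟨φ (some ⟨e, he⟩), ?_⟩
    rw [Equiv.symm_apply_apply]
    exact F.self e he
  · intro e he f hf hef
    rcases F.meet e he f hf hef with h | h
    · refine ⟨φ (some ⟨f, hf⟩), ?_⟩
      rw [Equiv.symm_apply_apply]
      exact ⟨h, F.self f hf⟩
    · refine ⟨φ (some ⟨e, he⟩), ?_⟩
      rw [Equiv.symm_apply_apply]
      exact ⟨F.self e he, h⟩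
  · intro x
    rcases φ.symm x with _ | e
    · simp [lab]
    · exact F.card e e.2

/-- The hierarchy width of a hypergraph equals the minimum width of a hierarchy
decomposition of it (in particular, a decomposition of minimum width exists). -/
theorem stmt15 {α ι : Type*} [DecidableEq ι] (dep : ι → Finset α) (E : Finset ι) :
    IsLeast {k : ℕ | ∃ D : HierDecomp dep E, D.width = k} (hw dep E) := by
  have lower : ∀ D : HierDecomp dep E, hw dep E ≤ D.width := fun D => by
    let := D.fin
    apply hw_le_of_laminar dep (fun e => {v | e ∈ D.χ v}) D.laminar E D.width
      (fun e he => D.cover e he) (fun e he f hf h => D.meet e he f hf h)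
    intro v
    refine le_trans (Finset.card_le_card fun e he => ?_)
      (Finset.le_sup (f := fun v => (D.χ v).card) (Finset.mem_univ v))
    exact ((@Finset.mem_filter _ _ (_) _ _).1 he).2
  refine ⟨?_, ?_⟩
  · obtain ⟨A, hA⟩ := exists_elimForest dep E (hw dep E) le_rfl
    obtain ⟨D, hD⟩ := hA.exists_hierDecomp
    exact ⟨D, le_antisymm hD (lower D)⟩
  · rintro k ⟨D, rfl⟩
    exact lower D
end
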